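/- arXiv:math/0211197 — 5 statements merged into one kernel-verified Lean document; each statement's English description precedes it below -/
import Mathlib

section
/- Let n ≥ 2 and let B_n be the Artin braid group. If H_1 and H_2 are half-twists in B_n (i.e., each is conjugate in B_n to the generator σ_1) and H_1^m = H_2^m for some integer m ≥ 1, then H_1 = H_2. In other words, within the conjugacy class of half-twists, m-th roots are unique. -/
/-!
Since half-twists are conjugates of `σ₁`, the claim says that an element of the braid group which
commutes with `σ₁ ^ m` commutes with `σ₁`. The argument is Garside's.

In the positive braid monoid, Garside's lemma (`complete_of_eq`) describes all equalities
`σᵢ U = σⱼ V`: both sides are right multiples of the least common multiple of `σᵢ` and `σⱼ`. It is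
proved by induction on word length and on the derivation of the equality; the transitivity step
(`Complete.trans`) is the cube condition for three generators. Left cancellation follows.

With `D = σ₁ ⋯ σₙ₋₁`, one has `D σᵢ = σᵢ₊₁ D` and `D² σₙ₋₁ = σ₁ D²`, so that the full twist `Dⁿ` is
central and divisible by every generator. Inverting it embeds the monoid in a monoid in which the
generators are units, so the positive monoid embeds in the braid group (`toBraid_injective`), and
every braid is a positive braid up to a central factor (`exists_fraction`). It thus suffices to show
that `x σᵢ ^ m = σⱼ ^ m x` with `x` positive implies `x σᵢ = σⱼ x` (`semiconj_of_pow`). This goes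
by induction on the length of `x`: a first letter `s` of `x` equal to or commuting with `t = σⱼ`
cancels, and if `s` is adjacent to `t` then Garside's lemma gives `x = s t y`, and
`t ^ m (s t) = (s t) s ^ m` reduces the claim to `y`.
-/

/-- The braid relations on the free group on `m` generators, as relator words:
`σᵢσⱼσᵢ⁻¹σⱼ⁻¹` for `|i - j| ≥ 2` and `σᵢσⱼσᵢ(σⱼσᵢσⱼ)⁻¹` for `j = i + 1`. -/
def braidRels (m : ℕ) : Set (FreeGroup (Fin m)) :=
  { r | ∃ i j : Fin m,
      ((i : ℕ) + 2 ≤ (j : ℕ) ∧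
        r = .of i * .of j * (.of i)⁻¹ * (.of j)⁻¹) ∨
      ((j : ℕ) = (i : ℕ) + 1 ∧
        r = .of i * .of j * .of i * (.of j * .of i * .of j)⁻¹) }

/-- The Artin braid group `B_n`, presented over `Fin (n - 1)`. -/
def BraidGroup (n : ℕ) : Type := PresentedGroup (braidRels (n - 1))

instance (n : ℕ) : Group (BraidGroup n) := by unfold BraidGroup; infer_instance

/-- The standard Artin generator `σ_{i+1}` (0-indexed by `i : Fin (n - 1)`,
so `braidGen n ⟨0, _⟩` is `σ_1`). -/
def braidGen (n : ℕ) (i : Fin (n - 1)) : BraidGroup n := PresentedGroup.of i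

namespace HalfTwist

/-! ### The positive braid monoid -/

/-- The positive braid relations `σᵢσⱼ = σⱼσᵢ` for `i + 2 ≤ j` and `σᵢσⱼσᵢ = σⱼσᵢσⱼ` for
`j = i + 1`. -/
def posRels (k : ℕ) (a b : FreeMonoid (Fin k)) : Prop :=
  ∃ i j : Fin k,
    ((i : ℕ) + 2 ≤ (j : ℕ) ∧ a = .of i * .of j ∧ b = .of j * .of i) ∨
    ((j : ℕ) = (i : ℕ) + 1 ∧ a = .of i * .of j * .of i ∧ b = .of j * .of i * .of j)

/-- The positive braid monoid on `k` generators (that is, on `k + 1` strands). -/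
abbrev PosBraid (k : ℕ) : Type := PresentedMonoid (posRels k)

/-- The standard generators of the positive braid monoid. -/
def gen {k : ℕ} (i : Fin k) : PosBraid k := PresentedMonoid.of _ i

/-- Indices of distinct commuting generators. -/
def Far {k : ℕ} (i j : Fin k) : Prop := (i : ℕ) + 2 ≤ j ∨ (j : ℕ) + 2 ≤ i

/-- Indices of generators satisfying the braid relation of length three. -/
def Adj {k : ℕ} (i j : Fin k) : Prop := (i : ℕ) + 1 = j ∨ (j : ℕ) + 1 = i

variable {k : ℕ}

lemma Far.symm {i j : Fin k} (h : Far i j) : Far j i := Or.symm h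
lemma Adj.symm {i j : Fin k} (h : Adj i j) : Adj j i := Or.symm h
lemma Far.ne {i j : Fin k} (h : Far i j) : i ≠ j := by
  rintro rfl; unfold Far at h; omega
lemma Adj.ne {i j : Fin k} (h : Adj i j) : i ≠ j := by
  rintro rfl; unfold Adj at h; omega

lemma trichotomy (i j : Fin k) : i = j ∨ Far i j ∨ Adj i j := by
  unfold Far Adj; rw [Fin.ext_iff]; omega

lemma not_triangle {i j l : Fin k} (h₁ : Adj i j) (h₂ : Adj j l) : ¬ Adj i l := by
  unfold Adj at *; omega

lemma gen_far {i j : Fin k} (h : Far i j) : gen i * gen j = gen j * gen i := by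
  rcases h with h | h
  · exact PresentedMonoid.mk_eq_mk_of_rel (rels := posRels k) ⟨i, j, .inl ⟨h, rfl, rfl⟩⟩
  · exact (PresentedMonoid.mk_eq_mk_of_rel (rels := posRels k) ⟨j, i, .inl ⟨h, rfl, rfl⟩⟩).symm

lemma gen_adj {i j : Fin k} (h : Adj i j) :
    gen i * (gen j * gen i) = gen j * (gen i * gen j) := by
  rw [← mul_assoc, ← mul_assoc]
  rcases h with h | h
  · exact PresentedMonoid.mk_eq_mk_of_rel (rels := posRels k) ⟨i, j, .inr ⟨h.symm, rfl, rfl⟩⟩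
  · exact (PresentedMonoid.mk_eq_mk_of_rel (rels := posRels k)
      ⟨j, i, .inr ⟨h.symm, rfl, rfl⟩⟩).symm

lemma far_tail {i j : Fin k} (h : Far i j) (x : PosBraid k) :
    gen i * (gen j * x) = gen j * (gen i * x) := by
  rw [← mul_assoc, gen_far h, mul_assoc]

lemma adj_tail {i j : Fin k} (h : Adj i j) (x : PosBraid k) :
    gen i * (gen j * (gen i * x)) = gen j * (gen i * (gen j * x)) := by
  simpa only [mul_assoc] using congrArg (· * x) (gen_adj h)

/-- Word length as a homomorphism; the braid relations are homogeneous. -/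
def lenHom (k : ℕ) : PosBraid k →* Multiplicative ℕ :=
  PresentedMonoid.lift (fun _ => Multiplicative.ofAdd 1) (by
    rintro a b ⟨i, j, ⟨_, rfl, rfl⟩ | ⟨_, rfl, rfl⟩⟩ <;> simp)

/-- The word length of a positive braid. -/
def len (x : PosBraid k) : ℕ := (lenHom k x).toAdd

@[simp] lemma len_one : len (1 : PosBraid k) = 0 := by simp [len]
@[simp] lemma len_mul (x y : PosBraid k) : len (x * y) = len x + len y := by simp [len]
@[simp] lemma len_gen (i : Fin k) : len (gen i) = 1 := by
  simp [len, gen, lenHom]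

lemma eq_one_or_cons (x : PosBraid k) : x = 1 ∨ ∃ i y, x = gen i * y := by
  obtain ⟨w, rfl⟩ := PresentedMonoid.surjective_mk x
  cases w using FreeMonoid.casesOn with
  | one => exact .inl (map_one _)
  | of_mul i w => exact .inr ⟨i, PresentedMonoid.mk _ w, map_mul _ _ _⟩

/-! ### Garside's lemma and cancellation -/

/-- `Complete i j U V` says that `σᵢ U` and `σⱼ V` are the same right multiple of the least common
multiple of `σᵢ` and `σⱼ`. -/
def Complete (i j : Fin k) (U V : PosBraid k) : Prop :=
  (i = j ∧ U = V) ∨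
  (Far i j ∧ ∃ z, U = gen j * z ∧ V = gen i * z) ∨
  (Adj i j ∧ ∃ z, U = gen j * (gen i * z) ∧ V = gen i * (gen j * z))

lemma Complete.symm {i j : Fin k} {U V : PosBraid k} (h : Complete i j U V) :
    Complete j i V U := by
  rcases h with ⟨h, h'⟩ | ⟨h, z, h₁, h₂⟩ | ⟨h, z, h₁, h₂⟩
  · exact .inl ⟨h.symm, h'.symm⟩
  · exact .inr (.inl ⟨h.symm, z, h₂, h₁⟩)
  · exact .inr (.inr ⟨h.symm, z, h₂, h₁⟩)

lemma Complete.same {i : Fin k} {U V : PosBraid k} (h : Complete i i U V) : U = V := by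
  rcases h with ⟨_, h⟩ | ⟨h, _⟩ | ⟨h, _⟩
  · exact h
  · exact absurd rfl h.ne
  · exact absurd rfl h.ne

lemma Complete.far {i j : Fin k} {U V : PosBraid k} (h : Complete i j U V) (hij : Far i j) :
    ∃ z, U = gen j * z ∧ V = gen i * z := by
  rcases h with ⟨h, _⟩ | ⟨_, h⟩ | ⟨h, _⟩
  · exact absurd h hij.ne
  · exact h
  · unfold Far at hij; unfold Adj at h; omega

lemma Complete.adj {i j : Fin k} {U V : PosBraid k} (h : Complete i j U V) (hij : Adj i j) :
    ∃ z, U = gen j * (gen i * z) ∧ V = gen i * (gen j * z) := by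
  rcases h with ⟨h, _⟩ | ⟨h, _⟩ | ⟨_, h⟩
  · exact absurd h hij.ne
  · unfold Far at h; unfold Adj at hij; omega
  · exact h

/-- The cube condition for `σₛ ∼ σᵣ` adjacent and `σₜ` commuting with `σᵣ`. -/
lemma Complete.trans_adj_far {s r t : Fin k} {U W V : PosBraid k}
    (ih : ∀ (i j : Fin k) (X Y : PosBraid k), len X < len W → gen i * X = gen j * Y → Complete i j X Y)
    (hsr : Adj s r) (hrt : Far r t)
    (h₁ : Complete s r U W) (h₂ : Complete r t W V) : Complete s t U V := by
  obtain ⟨A, hU, hW⟩ := h₁.adj hsr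
  obtain ⟨B, hW', hV⟩ := h₂.far hrt
  have hl : len W = 2 + len A := by rw [hW]; simp; omega
  have e := hW.symm.trans hW'
  rcases trichotomy s t with rfl | hst | hst
  · exact absurd hsr.symm (by unfold Far at hrt; unfold Adj; omega)
  · obtain ⟨C, hC, hB⟩ := (ih s t _ _ (by simp; omega) e).far hst
    obtain ⟨E, hA, hC'⟩ := (ih r t _ _ (by omega) hC).far hrt
    refine .inr (.inl ⟨hst, gen r * (gen s * E), ?_, ?_⟩)
    · rw [hU, hA, far_tail hst, far_tail hrt]
    · rw [hV, hB, hC', adj_tail hsr]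
  · obtain ⟨C, hC, hB⟩ := (ih s t _ _ (by simp; omega) e).adj hst
    have hlC : len A = 1 + len C := by
      have := congrArg len hC; simp at this; omega
    obtain ⟨E, hA, hC'⟩ := (ih r t _ _ (by omega) hC).far hrt
    obtain ⟨F, hC'', hE⟩ := (ih s r _ _ (by omega) hC').adj hsr
    refine .inr (.inr ⟨hst, gen r * (gen s * (gen t * F)), ?_, ?_⟩)
    · rw [hU, hA, hE, adj_tail hst, far_tail hrt, ← far_tail hrt F, adj_tail hsr.symm]
    · rw [hV, hB, hC'', ← far_tail hrt, adj_tail hsr.symm, adj_tail hst, far_tail hrt]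

/-- The cube condition: transitivity of `Complete` follows from Garside's lemma for shorter
words. -/
lemma Complete.trans {s r t : Fin k} {U W V : PosBraid k}
    (ih : ∀ (i j : Fin k) (X Y : PosBraid k), len X < len W → gen i * X = gen j * Y → Complete i j X Y)
    (h₁ : Complete s r U W) (h₂ : Complete r t W V) : Complete s t U V := by
  rcases trichotomy s r with rfl | hsr | hsr
  · rwa [h₁.same]
  · rcases trichotomy r t with rfl | hrt | hrt
    · rwa [← h₂.same]
    · obtain ⟨A, hU, hW⟩ := h₁.far hsr
      obtain ⟨B, hW', hV⟩ := h₂.far hrt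
      have hl : len W = 1 + len A := by rw [hW]; simp
      have hc := ih s t _ _ (by omega) (hW.symm.trans hW')
      rcases trichotomy s t with rfl | hst | hst
      · exact .inl ⟨rfl, by rw [hU, hV, hc.same]⟩
      · obtain ⟨C, hA, hB⟩ := hc.far hst
        refine .inr (.inl ⟨hst, gen r * C, ?_, ?_⟩)
        · rw [hU, hA, far_tail hrt]
        · rw [hV, hB, far_tail hsr]
      · obtain ⟨C, hA, hB⟩ := hc.adj hst
        refine .inr (.inr ⟨hst, gen r * C, ?_, ?_⟩)
        · rw [hU, hA, far_tail hrt, far_tail hsr]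
        · rw [hV, hB, ← far_tail hsr, far_tail hrt]
    · exact (Complete.trans_adj_far ih hrt.symm hsr.symm h₂.symm h₁.symm).symm
  · rcases trichotomy r t with rfl | hrt | hrt
    · rwa [← h₂.same]
    · exact Complete.trans_adj_far ih hsr hrt h₁ h₂
    · obtain ⟨A, hU, hW⟩ := h₁.adj hsr
      obtain ⟨B, hW', hV⟩ := h₂.adj hrt
      have hl : len W = 2 + len A := by rw [hW]; simp; omega
      have hl' : len W = 2 + len B := by rw [hW']; simp; omega
      have hc := ih s t _ _ (by simp; omega) (hW.symm.trans hW')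
      rcases trichotomy s t with rfl | hst | hst
      · have hAB := (ih r r _ _ (by omega) hc.same).same
        exact .inl ⟨rfl, by rw [hU, hV, hAB]⟩
      · obtain ⟨C, hC, hC'⟩ := hc.far hst
        have hlC : len A = len C := by
          have := congrArg len hC; simp at this; omega
        obtain ⟨E, hA, hE⟩ := (ih r t _ _ (by omega) hC).adj hrt
        obtain ⟨F, hB, hF⟩ := (ih r s _ _ (by omega) hC').adj hsr.symm
        have hlE : len C = 2 + len E := by rw [hE]; simp; omega
        have e := (ih r r _ _ (by simp; omega) (hE.symm.trans hF)).same
        obtain ⟨G, hG, hG'⟩ := (ih t s _ _ (by omega) e).far hst.symm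
        refine .inr (.inl ⟨hst, gen r * (gen t * (gen s * (gen r * G))), ?_, ?_⟩)
        · rw [hU, hA, hG, far_tail hst, adj_tail hsr, adj_tail hrt]
        · rw [hV, hB, hG', ← far_tail hst, adj_tail hrt.symm, adj_tail hsr.symm, far_tail hst]
      · exact absurd hst (not_triangle hsr hrt)

/-- Garside's lemma, for words of bounded length: if the words `a` and `b` represent the same
positive braid, then deleting their first letters leaves braids related by `Complete`. -/
lemma complete_of_rel (l : ℕ)
    (ih : ∀ (i j : Fin k) (X Y : PosBraid k), len X < l → gen i * X = gen j * Y →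
      Complete i j X Y) {a b : FreeMonoid (Fin k)} (h : ConGen.Rel (posRels k) a b) :
    a.length ≤ l + 1 → ∀ i j u v, a = .of i * u → b = .of j * v →
      Complete i j (PresentedMonoid.mk (posRels k) u) (PresentedMonoid.mk (posRels k) v) := by
  have hlen : ∀ {a b : FreeMonoid (Fin k)}, ConGen.Rel (posRels k) a b → a.length = b.length := by
    intro a b h
    induction h with
    | of x y h => obtain ⟨i, j, ⟨_, rfl, rfl⟩ | ⟨_, rfl, rfl⟩⟩ := h <;> simp
    | refl => rfl
    | symm _ e => exact e.symm
    | trans _ _ e e' => exact e.trans e'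
    | mul _ _ e e' => simp [e, e']
  have hinj : ∀ {i j : Fin k} {u v : FreeMonoid (Fin k)},
      FreeMonoid.of i * u = .of j * v → i = j ∧ u = v := fun h => List.cons_eq_cons.1 h
  have hmk : ∀ w : FreeMonoid (Fin k), len (PresentedMonoid.mk (posRels k) w) = w.length := by
    intro w
    induction w using FreeMonoid.recOn with
    | one => simp
    | of_mul i w e =>
      rw [map_mul, len_mul, e]
      change len (gen i) + _ = _
      simp
  induction h with
  | of x y h =>
    rintro - i j u v hu hv
    obtain ⟨i', j', ⟨hij, rfl, rfl⟩ | ⟨hij, rfl, rfl⟩⟩ := h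
    · obtain ⟨rfl, rfl⟩ := hinj hu
      obtain ⟨rfl, rfl⟩ := hinj hv
      exact .inr (.inl ⟨.inl hij, 1, (mul_one _).symm, (mul_one _).symm⟩)
    · rw [mul_assoc] at hu hv
      obtain ⟨rfl, rfl⟩ := hinj hu
      obtain ⟨rfl, rfl⟩ := hinj hv
      exact .inr (.inr ⟨.inl hij.symm, 1, by rw [mul_one, map_mul]; rfl,
        by rw [mul_one, map_mul]; rfl⟩)
  | refl x =>
    rintro - i j u v hu hv
    obtain ⟨rfl, rfl⟩ := hinj (hu.symm.trans hv)
    exact .inl ⟨rfl, rfl⟩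
  | symm h e =>
    intro hl i j u v hu hv
    exact (e (by rw [hlen h]; exact hl) j i v u hv hu).symm
  | @trans x y z h h' e e' =>
    intro hl i j u v hu hv
    have hy := hlen h
    cases y using FreeMonoid.casesOn with
    | one => rw [hu] at hy; simp at hy
    | of_mul r w =>
      refine Complete.trans (fun i j X Y hX => ih i j X Y ?_) (e hl i r u w hu rfl)
        (e' (hy ▸ hl) r j w v rfl hv)
      rw [hmk] at hX
      simp at hy
      omega
  | @mul w x y z h h' e e' =>
    intro hl i j u v hu hv
    have hwx := hlen h
    have hyz : PresentedMonoid.mk (posRels k) y = PresentedMonoid.mk (posRels k) z :=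
      PresentedMonoid.mk_eq_mk_iff.2 h'
    simp only [FreeMonoid.length_mul] at hl
    cases w using FreeMonoid.casesOn with
    | one =>
      obtain rfl : x = 1 := FreeMonoid.length_eq_zero.1 (by simpa using hwx.symm)
      rw [one_mul] at hu hv
      exact e' (by omega) i j u v hu hv
    | of_mul p w =>
      cases x using FreeMonoid.casesOn with
      | one => simp at hwx
      | of_mul q x =>
        rw [mul_assoc] at hu hv
        obtain ⟨rfl, rfl⟩ := hinj hu
        obtain ⟨rfl, rfl⟩ := hinj hv
        rw [map_mul, map_mul, ← hyz]
        rcases e (by omega) p q w x rfl rfl with ⟨h, h'⟩ | ⟨h, c, h₁, h₂⟩ | ⟨h, c, h₁, h₂⟩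
        · exact .inl ⟨h, by rw [h']⟩
        · exact .inr (.inl ⟨h, c * PresentedMonoid.mk (posRels k) y, by rw [h₁, mul_assoc],
            by rw [h₂, mul_assoc]⟩)
        · exact .inr (.inr ⟨h, c * PresentedMonoid.mk (posRels k) y, by simp only [h₁, mul_assoc],
            by simp only [h₂, mul_assoc]⟩)

/-- Garside's lemma: a common right multiple of two generators is a right multiple of their
least common multiple. -/
theorem complete_of_eq (i j : Fin k) (X Y : PosBraid k) (h : gen i * X = gen j * Y) :
    Complete i j X Y := by
  induction hl : len X using Nat.strong_induction_on generalizing i j X Y with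
  | _ l ih =>
    obtain ⟨u, rfl⟩ := PresentedMonoid.surjective_mk X
    obtain ⟨v, rfl⟩ := PresentedMonoid.surjective_mk Y
    have hr : ConGen.Rel (posRels k) (.of i * u) (.of j * v) :=
      PresentedMonoid.mk_eq_mk_iff.1 (by rw [map_mul, map_mul]; exact h)
    refine complete_of_rel u.length (fun i j X Y hX e => ih _ ?_ i j X Y e rfl) hr
      (by simp [add_comm]) i j u v rfl rfl
    have hmk : len (PresentedMonoid.mk (posRels k) u) = u.length := by
      clear * -
      induction u using FreeMonoid.recOn with
      | one => simp
      | of_mul i w e =>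
        rw [map_mul, len_mul, e]
        change len (gen i) + _ = _
        simp
    omega

lemma gen_cancel {i : Fin k} {x y : PosBraid k} (h : gen i * x = gen i * y) : x = y :=
  (complete_of_eq i i x y h).same

theorem left_cancel {x y z : PosBraid k} (h : x * y = x * z) : y = z := by
  induction hl : len x generalizing x with
  | zero =>
    rcases eq_one_or_cons x with rfl | ⟨i, x, rfl⟩
    · simpa using h
    · simp at hl
  | succ l ih =>
    rcases eq_one_or_cons x with rfl | ⟨i, x, rfl⟩
    · simp at hl
    · rw [mul_assoc, mul_assoc] at h
      exact ih (gen_cancel h) (by simp at hl; omega)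

/-! ### Intertwiners of powers of generators in the positive monoid -/

lemma eq_of_pow_eq {i j : Fin k} {m : ℕ} {y : PosBraid k} (h : gen i ^ m = gen j * y) :
    i = j := by
  induction m generalizing y with
  | zero => have := congrArg len h; simp at this; omega
  | succ m ih =>
    rw [pow_succ'] at h
    rcases complete_of_eq _ _ _ _ h with ⟨h, _⟩ | ⟨_, z, h, _⟩ | ⟨_, z, h, _⟩
    · exact h
    · exact ih h
    · exact ih h

/-- For adjacent `s` and `t`, the least common multiple of `σₜ ^ (m + 1)` and `σₛ` is
`σₜ ^ (m + 1) σₛ σₜ`. -/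
lemma pow_adj {s t : Fin k} (hst : Adj s t) (m : ℕ) {y Y : PosBraid k}
    (h : gen t ^ (m + 1) * y = gen s * Y) : ∃ z, y = gen s * (gen t * z) := by
  induction m generalizing Y with
  | zero =>
    rw [zero_add, pow_one] at h
    obtain ⟨z, hz, _⟩ := (complete_of_eq _ _ _ _ h).adj hst.symm
    exact ⟨z, hz⟩
  | succ m ih =>
    rw [pow_succ', mul_assoc] at h
    obtain ⟨z, hz, _⟩ := (complete_of_eq _ _ _ _ h).adj hst.symm
    exact ih hz

theorem semiconj_of_pow (m : ℕ) (i j : Fin k) (x : PosBraid k)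
    (h : x * gen i ^ (m + 1) = gen j ^ (m + 1) * x) : x * gen i = gen j * x := by
  induction hl : len x using Nat.strong_induction_on generalizing j x with
  | _ l ih =>
    rcases eq_one_or_cons x with rfl | ⟨s, x, rfl⟩
    · rw [one_mul, mul_one, pow_succ' (gen j)] at h
      rw [eq_of_pow_eq h, one_mul, mul_one]
    · simp only [len_mul, len_gen] at hl
      rcases trichotomy s j with rfl | hsj | hsj
      · rw [← mul_assoc, ← pow_succ, pow_succ' _ (m + 1), mul_assoc, mul_assoc] at h
        rw [mul_assoc, ih (len x) (by omega) s x (gen_cancel h) rfl]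
      · have hc : Commute (gen j ^ (m + 1)) (gen s) := Commute.pow_left (gen_far hsj.symm) _
        rw [← mul_assoc, hc.eq, mul_assoc, mul_assoc] at h
        rw [mul_assoc, ih (len x) (by omega) j x (gen_cancel h) rfl, far_tail hsj]
      · obtain ⟨z, hz⟩ := pow_adj hsj m (h.symm.trans (mul_assoc _ _ _))
        obtain rfl := gen_cancel hz
        -- `σⱼ ^ (m + 1) (σₛ σⱼ) = (σₛ σⱼ) σₛ ^ (m + 1)`
        have hc : SemiconjBy (gen s * gen j) (gen s ^ (m + 1)) (gen j ^ (m + 1)) :=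
          SemiconjBy.pow_right (by
            unfold SemiconjBy; rw [mul_assoc, gen_adj hsj]) _
        simp only [← mul_assoc] at h
        rw [mul_assoc (_ ^ _), ← hc.eq] at h
        simp only [mul_assoc] at h
        have e := ih (len z) (by simp at hl; omega) s z (gen_cancel (gen_cancel h)) rfl
        simp only [mul_assoc]
        rw [e, adj_tail hsj]

/-! ### The full twist -/

section Twist

variable {K : ℕ}

/-- The generators of the positive monoid indexed by `ℕ`, with junk value `1` out of range. -/
def sig (K i : ℕ) : PosBraid (K + 1) := if h : i < K + 1 then gen ⟨i, h⟩ else 1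

lemma sig_val (i : Fin (K + 1)) : sig K i = gen i := dif_pos i.isLt

lemma sig_far {i j : ℕ} (h : i + 2 ≤ j) : sig K i * sig K j = sig K j * sig K i := by
  unfold sig
  split_ifs
  · exact gen_far (.inl h)
  all_goals simp

lemma sig_adj {i : ℕ} (h : i + 1 < K + 1) :
    sig K i * (sig K (i + 1) * sig K i) = sig K (i + 1) * (sig K i * sig K (i + 1)) := by
  unfold sig
  rw [dif_pos h, dif_pos (by omega)]
  exact gen_adj (.inl rfl)

/-- `δⱼ = σ₀ σ₁ ⋯ σⱼ₋₁`. -/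
def delta (K : ℕ) : ℕ → PosBraid (K + 1)
  | 0 => 1
  | j + 1 => delta K j * sig K j

/-- `εⱼ = σ₁ σ₂ ⋯ σⱼ`, the shift of `δⱼ`. -/
def eps (K : ℕ) : ℕ → PosBraid (K + 1)
  | 0 => 1
  | j + 1 => eps K j * sig K (j + 1)

lemma delta_succ (j : ℕ) : delta K (j + 1) = sig K 0 * eps K j := by
  induction j with
  | zero => simp [delta, eps]
  | succ j ih => rw [delta, ih, eps, mul_assoc]

lemma delta_far {i j : ℕ} (h : j + 1 ≤ i) : delta K j * sig K i = sig K i * delta K j := by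
  induction j with
  | zero => simp [delta]
  | succ j ih =>
    rw [delta, mul_assoc, sig_far (by omega), ← mul_assoc, ih (by omega), mul_assoc]

lemma delta_shift {i j : ℕ} (h : i + 1 < j) (hj : j ≤ K + 1) :
    delta K j * sig K i = sig K (i + 1) * delta K j := by
  induction j with
  | zero => omega
  | succ j ih =>
    rcases Nat.lt_or_ge (i + 1) j with h' | h'
    · rw [delta, mul_assoc, ← sig_far (by omega), ← mul_assoc, ih h' (by omega), mul_assoc]
    · obtain rfl : j = i + 1 := by omega
      simp only [delta, mul_assoc]
      rw [sig_adj (by omega), ← mul_assoc, delta_far le_rfl, mul_assoc]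

lemma delta_mul_delta {l j : ℕ} (h : l < j) (hj : j ≤ K + 1) :
    delta K j * delta K l = eps K l * delta K j := by
  induction l with
  | zero => simp [delta, eps]
  | succ l ih =>
    rw [delta, ← mul_assoc, ih (by omega), mul_assoc, delta_shift h hj, eps, mul_assoc]

lemma delta_sq : delta K (K + 1) ^ 2 * sig K K = sig K 0 * delta K (K + 1) ^ 2 := by
  have e : delta K (K + 1) * delta K (K + 1) = eps K K * delta K (K + 1) * sig K K := by
    rw [← delta_mul_delta (Nat.lt_succ_self K) le_rfl, mul_assoc]; rfl
  rw [pow_two]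
  conv_rhs => rw [e, ← mul_assoc, ← mul_assoc, ← delta_succ]

lemma delta_pow_shift (a : ℕ) {i : ℕ} (h : i + a < K + 1) :
    delta K (K + 1) ^ a * sig K i = sig K (i + a) * delta K (K + 1) ^ a := by
  induction a with
  | zero => simp
  | succ a ih =>
    rw [pow_succ', mul_assoc, ih (by omega), ← mul_assoc, delta_shift (by omega) le_rfl,
      mul_assoc]; rfl

/-- The full twist on `K + 2` strands. -/
def twist (K : ℕ) : PosBraid (K + 1) := delta K (K + 1) ^ (K + 2)

lemma twist_gen (i : Fin (K + 1)) : twist K * gen i = gen i * twist K := by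
  obtain ⟨b, hb⟩ : ∃ b, (i : ℕ) + b = K := ⟨K - i, by omega⟩
  have e : twist K = delta K (K + 1) ^ (i : ℕ) * (delta K (K + 1) ^ 2 * delta K (K + 1) ^ b) := by
    rw [← pow_add, ← pow_add, twist]; congr 1; omega
  have h := delta_pow_shift (K := K) b (i := i) (by omega)
  have h' := delta_pow_shift (K := K) i (i := 0) (by omega)
  rw [hb] at h
  rw [zero_add] at h'
  rw [← sig_val, e, mul_assoc, mul_assoc, h, ← mul_assoc (_ ^ 2), delta_sq, mul_assoc,
    ← mul_assoc, h', mul_assoc]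

lemma gen_dvd_twist (i : Fin (K + 1)) : ∃ w, gen i * w = twist K := by
  obtain ⟨b, hb⟩ : ∃ b, (i : ℕ) + b = K + 1 := ⟨K + 1 - i, by omega⟩
  have h' := delta_pow_shift (K := K) i (i := 0) (by omega)
  rw [zero_add] at h'
  refine ⟨delta K (K + 1) ^ (i : ℕ) * (eps K K * delta K (K + 1) ^ b), ?_⟩
  rw [← sig_val, ← mul_assoc, ← h', mul_assoc, ← mul_assoc (sig K 0), ← delta_succ, ← pow_succ',
    ← pow_add, twist]
  congr 1; omega

lemma mul_gen_dvd_twist (i : Fin (K + 1)) :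
    ∃ w, gen i * w = twist K ∧ w * gen i = twist K := by
  obtain ⟨w, hw⟩ := gen_dvd_twist i
  refine ⟨w, hw, gen_cancel (i := i) ?_⟩
  rw [← mul_assoc, hw, twist_gen]

lemma twist_central (x : PosBraid (K + 1)) : twist K * x = x * twist K := by
  induction hl : len x generalizing x with
  | zero =>
    rcases eq_one_or_cons x with rfl | ⟨i, x, rfl⟩
    · simp
    · simp at hl
  | succ l ih =>
    rcases eq_one_or_cons x with rfl | ⟨i, x, rfl⟩
    · simp
    · rw [← mul_assoc, twist_gen, mul_assoc, ih x (by simp at hl; omega), mul_assoc]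

/-! ### The positive monoid inside the braid group -/

lemma twist_powers_central (s : Submonoid.powers (twist K)) (x : PosBraid (K + 1)) :
    (s : PosBraid (K + 1)) * x = x * s := by
  obtain ⟨_, n, rfl⟩ := s
  exact (Commute.pow_left (twist_central x) n)

/-- Powers of the full twist form an Ore set, being central. -/
instance twistOre : OreLocalization.OreSet (Submonoid.powers (twist K)) where
  ore_right_cancel r₁ r₂ s h := ⟨s, by
    rw [twist_powers_central, twist_powers_central, h]⟩
  oreNum r _ := r
  oreDenom _ s := s
  ore_eq r s := twist_powers_central s r

/-- The positive monoid with the full twist inverted. -/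
abbrev Loc (K : ℕ) : Type := OreLocalization (Submonoid.powers (twist K)) (PosBraid (K + 1))

/-- The canonical map to the localization. -/
def toLoc (K : ℕ) : PosBraid (K + 1) →* Loc K := OreLocalization.numeratorHom

lemma toLoc_injective : Function.Injective (toLoc K) := by
  intro x y h
  obtain ⟨u, v, h₁, h₂⟩ := OreLocalization.oreDiv_eq_iff.1 h
  simp only [OneMemClass.coe_one, mul_one] at h₂
  rw [← h₂] at h₁
  exact (left_cancel h₁).symm

lemma isUnit_toLoc_gen (i : Fin (K + 1)) : IsUnit (toLoc K (gen i)) := by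
  obtain ⟨w, h₁, h₂⟩ := mul_gen_dvd_twist i
  have hz : IsUnit (toLoc K (twist K)) :=
    OreLocalization.numerator_isUnit (⟨twist K, Submonoid.mem_powers _⟩ : Submonoid.powers _)
  obtain ⟨u, hu⟩ := hz
  refine isUnit_iff_exists_and_exists.2 ⟨⟨toLoc K w * ↑u⁻¹, ?_⟩, ⟨↑u⁻¹ * toLoc K w, ?_⟩⟩
  · rw [← mul_assoc, ← map_mul, h₁, ← hu, Units.mul_inv]
  · rw [mul_assoc, ← map_mul, h₂, ← hu, Units.inv_mul]

/-- The braid group on `k + 1` strands. -/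
abbrev Braid (k : ℕ) : Type := PresentedGroup (braidRels k)

/-- The standard generators of the braid group. -/
def bgen (i : Fin k) : Braid k := PresentedGroup.of i

/-- The canonical map from positive braids to braids. -/
def toBraid (k : ℕ) : PosBraid k →* Braid k :=
  PresentedMonoid.lift bgen (by
    rintro a b ⟨i, j, ⟨h, rfl, rfl⟩ | ⟨h, rfl, rfl⟩⟩
    · have := PresentedGroup.one_of_mem (rels := braidRels k) ⟨i, j, .inl ⟨h, rfl⟩⟩
      simp only [map_mul, map_inv] at this
      simp only [map_mul, FreeMonoid.lift_eval_of]
      rw [mul_inv_eq_one, mul_inv_eq_iff_eq_mul] at this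
      exact this
    · have := PresentedGroup.one_of_mem (rels := braidRels k) ⟨i, j, .inr ⟨h, rfl⟩⟩
      simp only [map_mul, map_inv] at this
      simp only [map_mul, FreeMonoid.lift_eval_of]
      rw [mul_inv_eq_one] at this
      exact this)

lemma toBraid_gen (i : Fin k) : toBraid k (gen i) = bgen i := PresentedMonoid.lift_of _ _

lemma posBraid_induction {P : PosBraid k → Prop} (one : P 1)
    (cons : ∀ i x, P x → P (gen i * x)) (x : PosBraid k) : P x := by
  obtain ⟨w, rfl⟩ := PresentedMonoid.surjective_mk x
  induction w using FreeMonoid.recOn with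
  | one => exact one
  | of_mul i w ih => rw [map_mul]; exact cons i _ ih

/-- The generators become units in the localization, which yields a homomorphism from the braid
group through which the embedding `toLoc` factors. -/
theorem toBraid_injective : Function.Injective (toBraid (K + 1)) := by
  choose u hu using isUnit_toLoc_gen (K := K)
  have hf : ∀ {i j}, Far i j → u i * u j = u j * u i := fun h => Units.ext (by
    simp only [Units.val_mul, hu, ← map_mul, gen_far h])
  have ha : ∀ {i j}, Adj i j → u i * (u j * u i) = u j * (u i * u j) := fun h => Units.ext (by
    simp only [Units.val_mul, hu, ← map_mul, gen_adj h])
  have hrel : ∀ r ∈ braidRels (K + 1), FreeGroup.lift u r = 1 := by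
    rintro r ⟨i, j, ⟨h, rfl⟩ | ⟨h, rfl⟩⟩
    · simp only [map_mul, map_inv, FreeGroup.lift_apply_of]
      rw [mul_inv_eq_one, mul_inv_eq_iff_eq_mul]
      exact hf (.inl h)
    · simp only [map_mul, map_inv, FreeGroup.lift_apply_of]
      rw [mul_inv_eq_one, mul_assoc, mul_assoc]
      exact ha (.inl h.symm)
  have key : ∀ x, (PresentedGroup.toGroup hrel (toBraid (K + 1) x) : Loc K) = toLoc K x := by
    intro x
    induction x using posBraid_induction with
    | one => simp
    | cons i x ih =>
      rw [map_mul, map_mul, Units.val_mul, ih, map_mul, toBraid_gen, bgen,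
        PresentedGroup.toGroup.of, hu]
  intro x y h
  apply toLoc_injective
  rw [← key, ← key, h]

lemma twist_commutes (g : Braid (K + 1)) : Commute (toBraid (K + 1) (twist K)) g := by
  have h : g ∈ Subgroup.centralizer {toBraid (K + 1) (twist K)} := by
    refine PresentedGroup.generated_by _ _ (fun i => ?_) g
    rw [Subgroup.mem_centralizer_singleton_iff]
    have := congrArg (toBraid (K + 1)) (twist_gen i)
    rw [map_mul, map_mul, toBraid_gen] at this
    exact this.symm
  exact (Subgroup.mem_centralizer_singleton_iff.1 h).symm

/-- Every braid becomes positive after multiplication by a power of the full twist. -/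
theorem exists_fraction (g : Braid (K + 1)) :
    ∃ (a : ℕ) (x : PosBraid (K + 1)),
      toBraid (K + 1) (twist K) ^ a * g = toBraid (K + 1) x := by
  have hg : g ∈ Subgroup.closure (Set.range (PresentedGroup.of (rels := braidRels (K + 1)))) := by
    rw [PresentedGroup.closure_range_of]; trivial
  induction hg using Subgroup.closure_induction_left with
  | one => exact ⟨0, 1, by simp⟩
  | mul_left y hy g _ ih =>
    obtain ⟨i, rfl⟩ := hy
    obtain ⟨a, x, h⟩ := ih
    refine ⟨a, gen i * x, ?_⟩
    rw [map_mul, ← h, toBraid_gen, ← mul_assoc, ((twist_commutes _).pow_left a).eq, mul_assoc]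
    rfl
  | inv_mul_cancel y hy g _ ih =>
    obtain ⟨i, rfl⟩ := hy
    obtain ⟨a, x, h⟩ := ih
    obtain ⟨w, hw, hw'⟩ := mul_gen_dvd_twist i
    refine ⟨a + 1, w * x, ?_⟩
    have e : toBraid (K + 1) (twist K) = toBraid (K + 1) w * PresentedGroup.of i := by
      rw [← hw', map_mul, toBraid_gen]; rfl
    rw [map_mul, ← h, pow_succ, mul_assoc]
    conv_lhs => rw [e, mul_assoc, mul_inv_cancel_left, ← e]
    rw [← mul_assoc, ((twist_commutes _).pow_left a).eq, mul_assoc]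

/-- The centralizer of a positive power of a generator is that of the generator. -/
theorem commute_of_commute_pow (i : Fin (K + 1)) (m : ℕ) (g : Braid (K + 1))
    (h : Commute g (bgen i ^ (m + 1))) : Commute g (bgen i) := by
  obtain ⟨a, x, hx⟩ := exists_fraction g
  have hz : ∀ b, Commute (toBraid (K + 1) (twist K) ^ a) b :=
    fun b => (twist_commutes b).pow_left a
  have h₁ : Commute (toBraid (K + 1) x) (bgen i ^ (m + 1)) := hx ▸ (hz _).mul_left h
  have h₂ : x * gen i = gen i * x := by
    refine semiconj_of_pow m i i x (toBraid_injective ?_)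
    rw [map_mul, map_mul, map_pow, toBraid_gen]
    exact h₁.eq
  have h₃ : Commute (toBraid (K + 1) x) (bgen i) := by
    have := congrArg (toBraid (K + 1)) h₂
    rwa [map_mul, map_mul, toBraid_gen] at this
  have hg : g = (toBraid (K + 1) (twist K) ^ a)⁻¹ * toBraid (K + 1) x := by
    rw [← hx, inv_mul_cancel_left]
  rw [hg]
  exact (hz _).inv_left.mul_left h₃

theorem isConj_pow_injective (i : Fin (K + 1)) (H₁ H₂ : Braid (K + 1))
    (h₁ : IsConj (bgen i) H₁) (h₂ : IsConj (bgen i) H₂) (m : ℕ)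
    (h : H₁ ^ (m + 1) = H₂ ^ (m + 1)) : H₁ = H₂ := by
  obtain ⟨c, rfl⟩ := isConj_iff.1 h₁
  obtain ⟨d, rfl⟩ := isConj_iff.1 h₂
  rw [conj_pow, conj_pow] at h
  have hc : Commute (d⁻¹ * c) (bgen i ^ (m + 1)) := by
    have := congrArg (fun t => d⁻¹ * t * c) h
    simpa [Commute, SemiconjBy, mul_assoc] using this
  have e := (commute_of_commute_pow i m _ hc).eq
  have := congrArg (fun t => d * t * c⁻¹) e
  simpa [mul_assoc] using this

end Twist

end HalfTwist

/-- Half-twists (conjugates of `σ_1`) have unique `m`-th roots among half-twists: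
if `H₁ᵐ = H₂ᵐ` for half-twists `H₁, H₂` and `m ≥ 1`, then `H₁ = H₂`. -/
theorem halfTwist_pow_injective (n : ℕ) (hn : 2 ≤ n) (H₁ H₂ : BraidGroup n)
    (h₁ : IsConj (braidGen n ⟨0, by omega⟩) H₁)
    (h₂ : IsConj (braidGen n ⟨0, by omega⟩) H₂)
    (m : ℕ) (hm : 1 ≤ m) (h : H₁ ^ m = H₂ ^ m) :
    H₁ = H₂ := by
  obtain ⟨K, rfl⟩ := Nat.exists_eq_add_of_le' hn
  obtain ⟨m, rfl⟩ := Nat.exists_eq_add_of_le' hm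
  exact HalfTwist.isConj_pow_injective (K := K) 0 H₁ H₂ h₁ h₂ m h
end

section
/- Let n ≥ 2 and let B_n be the Artin braid group. For any element w ∈ B_n, any indices 1 ≤ i, j ≤ n−1, and any integer m ≥ 1: if w⁻¹ · σ_i^m · w = σ_j^m, then w⁻¹ · σ_i · w = σ_j. -/
namespace BraidMonoid

/-! ### Garside's lemma for the positive braid monoid -/

variable {k : ℕ}

/-- The braid relations as relations between positive words in `k` letters. -/
def Rels (k : ℕ) : FreeMonoid (Fin k) → FreeMonoid (Fin k) → Prop := fun x y =>
  ∃ i j : Fin k,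
    ((i : ℕ) + 2 ≤ (j : ℕ) ∧ x = .of i * .of j ∧ y = .of j * .of i) ∨
    ((j : ℕ) = (i : ℕ) + 1 ∧ x = .of i * (.of j * .of i) ∧ y = .of j * (.of i * .of j))

/-- The positive braid monoid on `k` generators (that is, on `k + 1` strands). -/
abbrev Pos (k : ℕ) : Type := PresentedMonoid (Rels k)

/-- The class of a positive word. -/
abbrev cls (x : FreeMonoid (Fin k)) : Pos k := PresentedMonoid.mk (Rels k) x

/-- The generators of the positive braid monoid. -/
abbrev s (i : Fin k) : Pos k := PresentedMonoid.of (Rels k) i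

/-- Letters at distance at least `2`, whose generators commute. -/
def Far (i j : Fin k) : Prop := (i : ℕ) + 2 ≤ j ∨ (j : ℕ) + 2 ≤ i

/-- Adjacent letters, whose generators satisfy the braid relation. -/
def Adj (i j : Fin k) : Prop := (j : ℕ) = i + 1 ∨ (i : ℕ) = j + 1

lemma Far.symm {i j : Fin k} (h : Far i j) : Far j i := Or.symm h

lemma Adj.symm {i j : Fin k} (h : Adj i j) : Adj j i := Or.symm h

lemma trichotomy (i j : Fin k) : i = j ∨ Far i j ∨ Adj i j := by
  rw [Fin.ext_iff]; unfold Far Adj; omega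

lemma Far.comm {i j : Fin k} (h : Far i j) (x : Pos k) :
    s i * (s j * x) = s j * (s i * x) := by
  have key : ∀ i j : Fin k, (i : ℕ) + 2 ≤ j → s i * s j = s j * s i := fun i j h =>
    PresentedMonoid.mk_eq_mk_of_rel (rels := Rels k) ⟨i, j, .inl ⟨h, rfl, rfl⟩⟩
  rw [← mul_assoc, ← mul_assoc]
  rcases h with h | h
  · rw [key i j h]
  · rw [key j i h]

lemma Adj.braid {i j : Fin k} (h : Adj i j) (x : Pos k) :
    s i * (s j * (s i * x)) = s j * (s i * (s j * x)) := by
  have key : ∀ i j : Fin k, (j : ℕ) = i + 1 → s i * (s j * s i) = s j * (s i * s j) := fun i j h =>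
    PresentedMonoid.mk_eq_mk_of_rel (rels := Rels k) ⟨i, j, .inr ⟨h, rfl, rfl⟩⟩
  rcases h with h | h
  · simpa only [mul_assoc] using congrArg (· * x) (key i j h)
  · simpa only [mul_assoc] using (congrArg (· * x) (key j i h)).symm

/-- Induction on positive braids, adding one generator on the left at a time. -/
lemma induction_left {p : Pos k → Prop} (one : p 1) (mul : ∀ i x, p x → p (s i * x))
    (x : Pos k) : p x := by
  obtain ⟨a, rfl⟩ := PresentedMonoid.surjective_mk x
  induction a using FreeMonoid.inductionOn' with
  | one => exact one
  | of_mul i a ih => exact mul i _ ih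

lemma eq_one_or (x : Pos k) : x = 1 ∨ ∃ i y, x = s i * y := by
  induction x using induction_left with
  | one => exact .inl rfl
  | mul i x _ => exact .inr ⟨i, x, rfl⟩

/-- The word length, which is well defined since the braid relations are homogeneous. -/
def lenHom (k : ℕ) : Pos k →* Multiplicative ℕ :=
  PresentedMonoid.lift (fun _ => Multiplicative.ofAdd 1) (by
    rintro a b ⟨i, j, ⟨-, rfl, rfl⟩ | ⟨-, rfl, rfl⟩⟩ <;> rfl)

/-- The length of a positive braid as a natural number. -/
def len (x : Pos k) : ℕ := (lenHom k x).toAdd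

@[simp] lemma len_one : len (1 : Pos k) = 0 := by simp [len]

@[simp] lemma len_mul (x y : Pos k) : len (x * y) = len x + len y := by simp [len]

@[simp] lemma len_s (i : Fin k) : len (s i) = 1 := by simp [len, lenHom, s]

@[simp] lemma len_pow (x : Pos k) (n : ℕ) : len (x ^ n) = n * len x := by simp [len]

lemma len_cls (x : FreeMonoid (Fin k)) : len (cls x) = x.length := by
  induction x using FreeMonoid.inductionOn' with
  | one => exact len_one
  | of_mul i a ih =>
    rw [cls, map_mul, len_mul, FreeMonoid.length_mul, ← cls, ← cls, ih]
    congr 1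

/-- The conclusion of Garside's lemma for an equation `s a * u = s b * v`: both sides factor
through the least common right multiple of `s a` and `s b`. -/
def Compl (a : Fin k) (u : Pos k) (b : Fin k) (v : Pos k) : Prop :=
  (a = b ∧ u = v) ∨
  (Far a b ∧ ∃ c, u = s b * c ∧ v = s a * c) ∨
  (Adj a b ∧ ∃ c, u = s b * (s a * c) ∧ v = s a * (s b * c))

lemma Compl.symm {a b : Fin k} {u v : Pos k} (h : Compl a u b v) : Compl b v a u := by
  rcases h with ⟨rfl, rfl⟩ | ⟨h, c, rfl, rfl⟩ | ⟨h, c, rfl, rfl⟩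
  · exact .inl ⟨rfl, rfl⟩
  · exact .inr (.inl ⟨h.symm, c, rfl, rfl⟩)
  · exact .inr (.inr ⟨h.symm, c, rfl, rfl⟩)

lemma Compl.mul_right {a b : Fin k} {u v : Pos k} (h : Compl a u b v) (y : Pos k) :
    Compl a (u * y) b (v * y) := by
  rcases h with ⟨rfl, rfl⟩ | ⟨h, c, rfl, rfl⟩ | ⟨h, c, rfl, rfl⟩
  · exact .inl ⟨rfl, rfl⟩
  · exact .inr (.inl ⟨h, c * y, by simp only [mul_assoc], by simp only [mul_assoc]⟩)
  · exact .inr (.inr ⟨h, c * y, by simp only [mul_assoc], by simp only [mul_assoc]⟩)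

lemma Compl.cancel {a : Fin k} {u v : Pos k} (h : Compl a u a v) : u = v := by
  rcases h with ⟨-, h⟩ | ⟨h, -⟩ | ⟨h, -⟩
  · exact h
  · unfold Far at h; omega
  · unfold Adj at h; omega

lemma Compl.far {a b : Fin k} {u v : Pos k} (h : Compl a u b v) (hab : Far a b) :
    ∃ c, u = s b * c ∧ v = s a * c := by
  rcases h with ⟨rfl, -⟩ | ⟨-, h⟩ | ⟨h, -⟩
  · unfold Far at hab; omega
  · exact h
  · unfold Far at hab; unfold Adj at h; omega

lemma Compl.adj {a b : Fin k} {u v : Pos k} (h : Compl a u b v) (hab : Adj a b) :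
    ∃ c, u = s b * (s a * c) ∧ v = s a * (s b * c) := by
  rcases h with ⟨rfl, -⟩ | ⟨h, -⟩ | ⟨-, h⟩
  · unfold Adj at hab; omega
  · unfold Far at h; unfold Adj at hab; omega
  · exact h

/-- Garside's lemma for equations whose cofactor `u` has length less than `L`. -/
def Garside (k L : ℕ) : Prop :=
  ∀ (a b : Fin k) (u v : Pos k), len u < L → s a * u = s b * v → Compl a u b v

/-- The case of `Compl.trans` in which the first pair of letters commutes and the second one is
adjacent. -/
lemma Compl.trans_far_adj {L : ℕ} (H : Garside k L) {a b c : Fin k} {p q : Pos k}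
    (hab : Far a b) (hbc : Adj b c) (hL : len p < L)
    (e : s a * p = s c * (s b * q)) :
    Compl a (s b * p) c (s b * (s c * q)) := by
  have hl := congrArg len e
  simp only [len_mul, len_s] at hl
  rcases trichotomy a c with rfl | hac | hac
  · unfold Far at hab; unfold Adj at hbc; omega
  · obtain ⟨t, rfl, e2⟩ := (H _ _ _ _ hL e).far hac
    obtain ⟨r, rfl, rfl⟩ := (H _ _ _ _ (by omega) e2).far hab.symm
    refine .inr (.inl ⟨hac, s b * (s c * r), ?_, ?_⟩)
    · rw [hbc.braid]
    · rw [hac.symm.comm, hab.symm.comm]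
  · obtain ⟨t, rfl, e2⟩ := (H _ _ _ _ hL e).adj hac
    obtain ⟨r, rfl, e3⟩ := (H _ _ _ _ (by omega) e2).far hab.symm
    simp only [len_mul, len_s] at hl hL
    obtain ⟨z, rfl, rfl⟩ := (H _ _ _ _ (by omega) e3).adj hbc.symm
    refine .inr (.inr ⟨hac, s b * (s c * (s a * z)), ?_, ?_⟩)
    · rw [hab.comm, hbc.braid, hac.symm.braid, hab.symm.comm]
    · rw [hbc.symm.braid, hab.comm, hab.symm.comm z, hac.braid]

/-- Transitivity of `Compl` at a given length follows from Garside's lemma in smaller lengths.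
This is the cube condition for three generators, checked for each possible position of the three
letters. -/
lemma Compl.trans {L : ℕ} (H : Garside k L) {a b c : Fin k} {u v x : Pos k} (hL : len v ≤ L)
    (h1 : Compl a u b v) (h2 : Compl b v c x) : Compl a u c x := by
  rcases h1 with ⟨rfl, rfl⟩ | ⟨hab, p, rfl, rfl⟩ | ⟨hab, p, rfl, rfl⟩
  · exact h2
  · simp only [len_mul, len_s] at hL
    rcases h2 with ⟨rfl, rfl⟩ | ⟨hbc, q, e, rfl⟩ | ⟨hbc, q, e, rfl⟩
    · exact .inr (.inl ⟨hab, p, rfl, rfl⟩)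
    · rcases H _ _ _ _ (by omega) e with ⟨rfl, rfl⟩ | ⟨hac, t, rfl, rfl⟩ | ⟨hac, t, rfl, rfl⟩
      · exact .inl ⟨rfl, rfl⟩
      · exact .inr (.inl ⟨hac, s b * t, hbc.comm _, hab.symm.comm _⟩)
      · refine .inr (.inr ⟨hac, s b * t, ?_, ?_⟩)
        · rw [hbc.comm, hab.symm.comm]
        · rw [hab.symm.comm, hbc.comm]
    · exact Compl.trans_far_adj H hab hbc (by omega) e
  · simp only [len_mul, len_s] at hL
    rcases h2 with ⟨rfl, rfl⟩ | ⟨hbc, q, e, rfl⟩ | ⟨hbc, q, e, rfl⟩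
    · exact .inr (.inr ⟨hab, p, rfl, rfl⟩)
    · have hl := congrArg len e
      simp only [len_mul, len_s] at hl
      exact (Compl.trans_far_adj H hbc.symm hab.symm (by omega) e.symm).symm
    · have hl := congrArg len e
      simp only [len_mul, len_s] at hl
      rcases trichotomy a c with rfl | hac | hac
      · have e2 := (H _ _ _ _ (by simp; omega) e).cancel
        rw [(H _ _ _ _ (by omega) e2).cancel]
        exact .inl ⟨rfl, rfl⟩
      · obtain ⟨y, e1, e2⟩ := (H _ _ _ _ (by simp; omega) e).far hac
        obtain ⟨t, rfl, rfl⟩ := (H _ _ _ _ (by omega) e1).adj hbc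
        obtain ⟨t', rfl, e3⟩ := (H _ _ _ _ (by omega) e2).adj hab.symm
        simp only [len_mul, len_s] at hl hL
        have e4 := (H _ _ _ _ (by simp; omega) e3).cancel
        obtain ⟨z, rfl, rfl⟩ := (H _ _ _ _ (by omega) e4).far hac.symm
        refine .inr (.inl ⟨hac, s b * (s c * (s a * (s b * z))), ?_, ?_⟩)
        · rw [hac.comm, hab.braid, hbc.braid]
        · rw [hac.symm.comm, hbc.symm.braid, hab.symm.braid, hac.comm]
      · unfold Adj at hab hbc hac; omega

/-- Equivalence of positive words, strengthened by Garside's lemma for first letters followed by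
words of length at most `L`. The strengthening is what is propagated along derivations. -/
def Strong (L : ℕ) (x y : FreeMonoid (Fin k)) : Prop :=
  cls x = cls y ∧ ∀ a b u v, x = .of a * u → y = .of b * v → u.length ≤ L →
    Compl a (cls u) b (cls v)

lemma cls_of_mul (a : Fin k) (u : FreeMonoid (Fin k)) : cls (.of a * u) = s a * cls u := rfl

lemma strong_of_rel {L : ℕ} (H : Garside k L) {x y : FreeMonoid (Fin k)}
    (h : ConGen.Rel (Rels k) x y) : Strong L x y := by
  induction h with
  | of x y h =>
    refine ⟨PresentedMonoid.mk_eq_mk_of_rel h, ?_⟩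
    obtain ⟨i, j, ⟨hij, rfl, rfl⟩ | ⟨hij, rfl, rfl⟩⟩ := h
    · intro a b u v hx hy _
      obtain ⟨rfl, rfl⟩ := List.cons.inj hx
      obtain ⟨rfl, rfl⟩ := List.cons.inj hy
      exact .inr (.inl ⟨.inl hij, 1, rfl, rfl⟩)
    · intro a b u v hx hy _
      obtain ⟨rfl, rfl⟩ := List.cons.inj hx
      obtain ⟨rfl, rfl⟩ := List.cons.inj hy
      exact .inr (.inr ⟨.inl hij, 1, rfl, rfl⟩)
  | refl x =>
    refine ⟨rfl, fun a b u v hx hy _ => ?_⟩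
    obtain ⟨rfl, rfl⟩ := List.cons.inj (hx.symm.trans hy)
    exact .inl ⟨rfl, rfl⟩
  | symm _ ih =>
    refine ⟨ih.1.symm, fun a b u v hx hy hu => (ih.2 b a v u hy hx ?_).symm⟩
    have := congrArg len ih.1
    rw [hx, hy, len_cls, len_cls] at this
    simp at this; omega
  | @trans x y z _ _ ih1 ih2 =>
    refine ⟨ih1.1.trans ih2.1, fun a c u w hx hz hu => ?_⟩
    have hl := congrArg len ih1.1
    rw [hx, len_cls, len_cls] at hl
    cases y using FreeMonoid.casesOn with
    | one => simp at hl
    | of_mul b v =>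
      simp at hl
      exact Compl.trans H (by rw [len_cls]; omega) (ih1.2 a b u v hx rfl hu)
        (ih2.2 b c v w rfl hz (by omega))
  | @mul x1 y1 x2 y2 _ _ ih1 ih2 =>
    refine ⟨by rw [cls, map_mul, ← cls, ← cls, ih1.1, ih2.1, ← map_mul], ?_⟩
    intro a b u v hx hy hu
    have hl := congrArg len ih1.1
    rw [len_cls, len_cls] at hl
    cases x1 using FreeMonoid.casesOn with
    | one =>
      cases y1 using FreeMonoid.casesOn with
      | one => exact ih2.2 a b u v (by simpa using hx) (by simpa using hy) hu
      | of_mul b' v1 => simp at hl; omega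
    | of_mul a' u1 =>
      cases y1 using FreeMonoid.casesOn with
      | one => simp at hl
      | of_mul b' v1 =>
        rw [mul_assoc] at hx hy
        obtain ⟨rfl, rfl⟩ := List.cons.inj hx
        obtain ⟨rfl, rfl⟩ := List.cons.inj hy
        have := (ih1.2 _ _ u1 v1 rfl rfl (by
          have : (u1 * x2).length ≤ L := hu
          rw [FreeMonoid.length_mul] at this; omega)).mul_right (cls x2)
        have h2 := ih2.1
        change Compl _ (cls u1 * cls x2) _ (cls v1 * cls y2)
        rwa [← h2]

/-- **Garside's lemma**: an equation `s a * u = s b * v` in the positive braid monoid factors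
through the least common right multiple of `s a` and `s b`. -/
theorem compl_of_eq {a b : Fin k} {u v : Pos k} (h : s a * u = s b * v) : Compl a u b v := by
  have H : ∀ L, Garside k L := by
    intro L
    induction L with
    | zero => intro a b u v hu; omega
    | succ L ih =>
      intro a b u v hu h
      obtain ⟨u, rfl⟩ := PresentedMonoid.surjective_mk u
      obtain ⟨v, rfl⟩ := PresentedMonoid.surjective_mk v
      refine (strong_of_rel ih (x := .of a * u) (y := .of b * v) ?_).2 a b u v rfl rfl ?_
      · exact PresentedMonoid.mk_eq_mk_iff.1 h
      · rw [← len_cls]; exact Nat.le_of_lt_succ hu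
  exact H _ a b u v (Nat.lt_succ_self _) h

lemma mul_left_cancel' (x : Pos k) {u v : Pos k} (h : x * u = x * v) : u = v := by
  induction x using induction_left with
  | one => simpa using h
  | mul i x ih => exact ih (compl_of_eq (by simpa only [mul_assoc] using h)).cancel

/-! ### Conjugate powers of generators in the positive monoid -/

lemma far_of_pow {i j : Fin k} (hij : Far i j) (m : ℕ) {w x : Pos k}
    (h : s i ^ m * w = s j * x) : ∃ y, w = s j * y := by
  induction m generalizing x with
  | zero => exact ⟨x, by simpa using h⟩
  | succ m ih =>
    rw [pow_succ', mul_assoc] at h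
    obtain ⟨c, hc, -⟩ := (compl_of_eq h).far hij
    exact ih hc

lemma adj_of_pow {i j : Fin k} (hij : Adj i j) (m : ℕ) {w x : Pos k}
    (h : s i ^ (m + 1) * w = s j * x) : ∃ y, w = s j * (s i * y) := by
  induction m generalizing x with
  | zero =>
    rw [zero_add, pow_one] at h
    obtain ⟨c, hc, -⟩ := (compl_of_eq h).adj hij
    exact ⟨c, hc⟩
  | succ m ih =>
    rw [pow_succ', mul_assoc] at h
    obtain ⟨c, hc, -⟩ := (compl_of_eq h).adj hij
    exact ih hc

lemma Far.pow_comm {i j : Fin k} (hij : Far i j) (m : ℕ) (x : Pos k) :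
    s i ^ m * (s j * x) = s j * (s i ^ m * x) := by
  induction m with
  | zero => simp
  | succ m ih => rw [pow_succ', mul_assoc, ih, hij.comm, mul_assoc]

lemma Adj.pow_braid {i j : Fin k} (hij : Adj i j) (m : ℕ) (x : Pos k) :
    s i ^ m * (s j * (s i * x)) = s j * (s i * (s j ^ m * x)) := by
  induction m with
  | zero => simp
  | succ m ih => rw [pow_succ', mul_assoc, ih, hij.braid, pow_succ' (s j), mul_assoc]

/-- The positive case. A first letter `s l` of `w` with `l ≠ i` must continue, by the shape of the
least common multiple of `s i ^ m` and `s l`, to a prefix conjugating `s i` to a generator (`s l`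
if `l` is far from `i`, and `s l * s i` if `l` is adjacent to `i`); the prefix is stripped. -/
theorem pos_conj {m : ℕ} (N : ℕ) (i j : Fin k) (w : Pos k) (hN : len w ≤ N)
    (h : s i ^ (m + 1) * w = w * s j ^ (m + 1)) : s i * w = w * s j := by
  induction N using Nat.strong_induction_on generalizing i j w with | _ N ih
  rcases eq_one_or w with rfl | ⟨l, x, rfl⟩
  · -- Distinct generators have no equal positive powers: here `1` would have positive length.
    have h' : s i ^ (m + 1) * 1 = s j * s j ^ m := by rw [h, one_mul, pow_succ']
    rcases trichotomy i j with rfl | hij | hij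
    · simp
    · obtain ⟨y, hy⟩ := far_of_pow hij _ h'
      have := congrArg len hy
      simp at this; omega
    · obtain ⟨y, hy⟩ := adj_of_pow hij _ h'
      have := congrArg len hy
      simp at this; omega
  · simp only [len_mul, len_s] at hN
    rw [mul_assoc] at h
    rcases trichotomy i l with rfl | hil | hil
    · rw [← mul_assoc, ← pow_succ, pow_succ', mul_assoc] at h
      rw [mul_assoc, ← ih (len x) (by omega) i j x le_rfl (mul_left_cancel' _ h)]
    · rw [hil.pow_comm] at h
      rw [hil.comm, ih (len x) (by omega) i j x le_rfl (mul_left_cancel' _ h), mul_assoc]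
    · obtain ⟨y, hy⟩ := adj_of_pow hil _ h
      obtain rfl := mul_left_cancel' _ hy
      simp only [len_mul, len_s] at hN
      rw [hil.pow_braid, mul_assoc] at h
      rw [hil.braid, ih (len y) (by omega) l j y le_rfl
        (mul_left_cancel' _ (mul_left_cancel' _ h)), mul_assoc, mul_assoc]

/-! ### The central element and the embedding into the braid group -/

/-- The generators indexed by natural numbers, with the junk value `1` for indices `i ≥ k`. -/
def g (k i : ℕ) : Pos k := if h : i < k then s ⟨i, h⟩ else 1

lemma g_fin (i : Fin k) : g k i = s i := by simp [g]

lemma g_far {i j : ℕ} (h : i + 2 ≤ j) : g k i * g k j = g k j * g k i := by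
  unfold g
  split_ifs with hi hj
  · simpa using Far.comm (i := ⟨i, hi⟩) (j := ⟨j, hj⟩) (.inl h) 1
  all_goals simp

lemma g_braid {i : ℕ} (h : i + 1 < k) :
    g k i * (g k (i + 1) * g k i) = g k (i + 1) * (g k i * g k (i + 1)) := by
  have hi : i < k := by omega
  simpa [g, hi, h] using Adj.braid (i := ⟨i, hi⟩) (j := ⟨i + 1, h⟩) (.inl rfl) 1

/-- The product of the first `r` generators. -/
def D (k : ℕ) : ℕ → Pos k
  | 0 => 1
  | r + 1 => D k r * g k r

/-- The product of the `r` generators following the first one. -/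
def E (k : ℕ) : ℕ → Pos k
  | 0 => 1
  | r + 1 => E k r * g k (r + 1)

lemma D_comm {r j : ℕ} (h : r + 1 ≤ j) : D k r * g k j = g k j * D k r := by
  induction r with
  | zero => simp [D]
  | succ r ih => rw [D, mul_assoc, g_far h, ← mul_assoc, ih (by omega), mul_assoc]

lemma D_shift {r i : ℕ} (hi : i + 1 < r) (hr : r ≤ k) :
    D k r * g k i = g k (i + 1) * D k r := by
  induction r with
  | zero => omega
  | succ r ih =>
    rcases Nat.lt_or_ge (i + 1) r with h | h
    · rw [D, mul_assoc, ← g_far h, ← mul_assoc, ih h (by omega), mul_assoc]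
    · obtain rfl : r = i + 1 := by omega
      rw [D, D, mul_assoc, mul_assoc, g_braid (by omega), ← mul_assoc, D_comm le_rfl]
      simp only [mul_assoc]

lemma D_succ_eq (r : ℕ) : D k (r + 1) = g k 0 * E k r := by
  induction r with
  | zero => simp [D, E]
  | succ r ih => rw [D, ih, E, mul_assoc]

/-- The product `σ₁ ⋯ σₖ` of all generators, a positive `(k + 1)`-th root of the full twist. -/
def delta (k : ℕ) : Pos k := D k k

lemma delta_mul_D {r : ℕ} (h : r + 1 ≤ k) : delta k * D k r = E k r * delta k := by
  induction r with
  | zero => simp [D, E]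
  | succ r ih =>
    rw [D, ← mul_assoc, ih (by omega), mul_assoc, delta, D_shift (by omega) le_rfl, E, mul_assoc]

lemma delta_pow_shift {i p : ℕ} (h : i + p < k) :
    delta k ^ p * g k i = g k (i + p) * delta k ^ p := by
  induction p with
  | zero => simp
  | succ p ih =>
    rw [pow_succ', mul_assoc, ih (by omega), ← mul_assoc, delta, D_shift (by omega) le_rfl,
      mul_assoc]
    rfl

/-- The square of `delta` carries the last generator back to the first, closing the cycle of
shifts. -/
lemma delta_sq_last {r : ℕ} :
    delta (r + 1) ^ 2 * g (r + 1) r = g (r + 1) 0 * delta (r + 1) ^ 2 := by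
  have h1 : delta (r + 1) = D (r + 1) r * g (r + 1) r := rfl
  have h2 : delta (r + 1) = g (r + 1) 0 * E (r + 1) r := D_succ_eq r
  have h3 := delta_mul_D (k := r + 1) (r := r) le_rfl
  calc delta (r + 1) ^ 2 * g (r + 1) r
      = g (r + 1) 0 * E (r + 1) r * delta (r + 1) * g (r + 1) r := by rw [← h2, pow_two]
    _ = g (r + 1) 0 * (E (r + 1) r * delta (r + 1)) * g (r + 1) r := by simp only [mul_assoc]
    _ = g (r + 1) 0 * (delta (r + 1) * (D (r + 1) r * g (r + 1) r)) := by
        rw [← h3]; simp only [mul_assoc]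
    _ = g (r + 1) 0 * delta (r + 1) ^ 2 := by rw [← h1, pow_two]

/-- The full twist, in the form `(σ₁ ⋯ σₖ) ^ (k + 1)`. -/
def Z (k : ℕ) : Pos k := delta k ^ (k + 1)

lemma Z_comm_s (i : Fin k) : Z k * s i = s i * Z k := by
  obtain ⟨i, hi⟩ := i
  obtain ⟨r, rfl⟩ : ∃ r, k = r + 1 := ⟨k - 1, by omega⟩
  rw [← g_fin ⟨i, hi⟩]
  have e : Z (r + 1) = delta (r + 1) ^ i * (delta (r + 1) ^ 2 * delta (r + 1) ^ (r - i)) := by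
    rw [Z, ← pow_add, ← pow_add]; congr 1; omega
  have h1 := delta_pow_shift (k := r + 1) (i := i) (p := r - i) (by omega)
  have h2 := delta_pow_shift (k := r + 1) (i := 0) (p := i) (by omega)
  rw [Nat.add_sub_cancel' (by omega)] at h1
  rw [zero_add] at h2
  simp only [e]
  rw [mul_assoc, mul_assoc, h1, ← mul_assoc (_ ^ 2), delta_sq_last, mul_assoc, ← mul_assoc, h2]
  simp only [mul_assoc]

lemma Z_comm (x : Pos k) : Z k * x = x * Z k := by
  induction x using induction_left with
  | one => simp
  | mul i x ih => rw [← mul_assoc, Z_comm_s, mul_assoc, ih, mul_assoc]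

lemma Zpow_comm {z : Pos k} (hz : z ∈ Submonoid.powers (Z k)) (x : Pos k) : z * x = x * z := by
  obtain ⟨N, rfl⟩ := hz
  exact (show Commute (Z k) x from Z_comm x).pow_left N

lemma exists_mul_eq_Z (i : Fin k) : ∃ x, s i * x = Z k := by
  obtain ⟨i, hi⟩ := i
  obtain ⟨r, rfl⟩ : ∃ r, k = r + 1 := ⟨k - 1, by omega⟩
  have h2 := delta_pow_shift (k := r + 1) (i := 0) (p := i) (by omega)
  rw [zero_add] at h2
  refine ⟨delta (r + 1) ^ i * (E (r + 1) r * delta (r + 1) ^ (r + 1 - i)), ?_⟩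
  rw [← g_fin ⟨i, hi⟩, ← mul_assoc, ← h2, mul_assoc, ← mul_assoc (g _ _), ← D_succ_eq]
  change delta (r + 1) ^ i * (delta (r + 1) * _) = _
  rw [← pow_succ', ← pow_add, Z]
  congr 1
  omega

/-- Powers of the central element `Z` satisfy the Ore condition trivially. -/
instance : OreLocalization.OreSet (Submonoid.powers (Z k)) where
  ore_right_cancel r₁ r₂ z h := ⟨z, by rw [Zpow_comm z.2, Zpow_comm z.2, h]⟩
  oreNum r _ := r
  oreDenom _ z := z
  ore_eq r z := Zpow_comm z.2 r

/-- The positive braid monoid with the central element `Z` inverted. -/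
abbrev Loc (k : ℕ) : Type := OreLocalization (Submonoid.powers (Z k)) (Pos k)

/-- The localization map. -/
abbrev toLoc (k : ℕ) : Pos k →* Loc k := OreLocalization.numeratorHom

lemma toLoc_injective : Function.Injective (toLoc k) := by
  intro x y h
  obtain ⟨u, v, h1, h2⟩ := OreLocalization.oreDiv_eq_iff.1 h
  simp only [OneMemClass.coe_one, mul_one] at h2
  change (u : Pos k) * y = v * x at h1
  rw [h2] at h1
  exact (mul_left_cancel' _ h1).symm

lemma isUnit_toLoc_s (i : Fin k) : IsUnit (toLoc k (s i)) := by
  obtain ⟨x, hx⟩ := exists_mul_eq_Z i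
  have hx' : x * s i = Z k := by
    apply mul_left_cancel' (s i)
    rw [← mul_assoc, hx, Z_comm]
  have hc : Commute (toLoc k (s i)) (toLoc k x) := by
    rw [Commute, SemiconjBy, ← map_mul, ← map_mul, hx, hx']
  refine (hc.isUnit_mul_iff.1 ?_).1
  rw [← map_mul, hx]
  exact OreLocalization.numerator_isUnit (⟨Z k, Submonoid.mem_powers _⟩ : Submonoid.powers (Z k))

/-- The braid group with `k` Artin generators. -/
abbrev Grp (k : ℕ) : Type := PresentedGroup (braidRels k)

/-- The Artin generators of `Grp k`. -/
abbrev gs (i : Fin k) : Grp k := PresentedGroup.of i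

lemma gs_far {i j : Fin k} (h : (i : ℕ) + 2 ≤ j) : gs i * gs j = gs j * gs i := by
  have h1 : (PresentedGroup.mk (braidRels k)) (.of i * .of j * (.of i)⁻¹ * (.of j)⁻¹) = 1 :=
    PresentedGroup.one_of_mem ⟨i, j, .inl ⟨h, rfl⟩⟩
  have h2 : gs i * gs j * (gs i)⁻¹ * (gs j)⁻¹ = 1 := h1
  exact mul_inv_eq_iff_eq_mul.1 (mul_inv_eq_one.1 h2)

lemma gs_braid {i j : Fin k} (h : (j : ℕ) = i + 1) :
    gs i * (gs j * gs i) = gs j * (gs i * gs j) := by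
  have h1 : (PresentedGroup.mk (braidRels k))
      (.of i * .of j * .of i * (.of j * .of i * .of j)⁻¹) = 1 :=
    PresentedGroup.one_of_mem ⟨i, j, .inr ⟨h, rfl⟩⟩
  have h2 : gs i * gs j * gs i * (gs j * gs i * gs j)⁻¹ = 1 := h1
  simpa only [mul_assoc] using mul_inv_eq_one.1 h2

/-- The canonical map from the positive braid monoid to the braid group. -/
def toGrp (k : ℕ) : Pos k →* Grp k :=
  PresentedMonoid.lift gs (by
    rintro a b ⟨i, j, ⟨h, rfl, rfl⟩ | ⟨h, rfl, rfl⟩⟩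
    · simpa using gs_far h
    · simpa using gs_braid h)

@[simp] lemma toGrp_s (i : Fin k) : toGrp k (s i) = gs i := rfl

/-- The map from the braid group to the units of the localized monoid. -/
noncomputable def toUnits (k : ℕ) : Grp k →* (Loc k)ˣ :=
  PresentedGroup.toGroup (f := fun i => (isUnit_toLoc_s i).unit) (by
    rintro r ⟨i, j, ⟨h, rfl⟩ | ⟨h, rfl⟩⟩
    · simp only [map_mul, map_inv, FreeGroup.lift_apply_of]
      rw [mul_inv_eq_one, mul_inv_eq_iff_eq_mul]
      ext
      simp only [Units.val_mul, IsUnit.unit_spec, ← map_mul]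
      simpa using congrArg (toLoc k) (Far.comm (i := i) (j := j) (.inl h) 1)
    · simp only [map_mul, map_inv, FreeGroup.lift_apply_of]
      rw [mul_inv_eq_one]
      ext
      simp only [Units.val_mul, IsUnit.unit_spec, ← map_mul]
      simpa [mul_assoc] using congrArg (toLoc k) (Adj.braid (i := i) (j := j) (.inl h) 1))

/-- The positive braid monoid embeds in the braid group. -/
theorem toGrp_injective : Function.Injective (toGrp k) := by
  have key : ((Units.coeHom (Loc k)).comp (toUnits k)).comp (toGrp k) = toLoc k := by
    refine PresentedMonoid.ext _ fun i => ?_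
    simp only [MonoidHom.comp_apply, Units.coeHom_apply]
    change ((toUnits k (gs i) : (Loc k)ˣ) : Loc k) = _
    rw [toUnits, gs, PresentedGroup.toGroup.of, IsUnit.unit_spec]
  intro x y h
  apply toLoc_injective
  rw [← key]
  simp only [MonoidHom.comp_apply, h]

lemma toGrp_Z_comm (w : Grp k) : toGrp k (Z k) * w = w * toGrp k (Z k) := by
  have hw : w ∈ Subgroup.centralizer {toGrp k (Z k)} := by
    refine PresentedGroup.generated_by _ _ (fun i => ?_) w
    rw [Subgroup.mem_centralizer_singleton_iff]
    have h := congrArg (toGrp k) (Z_comm (s i))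
    rw [map_mul, map_mul, toGrp_s] at h
    exact h.symm
  exact (Subgroup.mem_centralizer_singleton_iff.1 hw).symm

/-- Every braid becomes positive after multiplication by a power of the full twist. -/
lemma exists_pos (w : Grp k) : ∃ (N : ℕ) (x : Pos k), w * toGrp k (Z k) ^ N = toGrp k x := by
  have hw : w ∈ Subgroup.closure (Set.range (gs (k := k))) := by
    rw [PresentedGroup.closure_range_of]; trivial
  induction hw using Subgroup.closure_induction_left with
  | one => exact ⟨0, 1, by simp⟩
  | mul_left a ha y _ ih =>
    obtain ⟨i, rfl⟩ := ha
    obtain ⟨N, x, hx⟩ := ih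
    exact ⟨N, s i * x, by rw [mul_assoc, hx, map_mul, toGrp_s]⟩
  | inv_mul_cancel a ha y _ ih =>
    obtain ⟨i, rfl⟩ := ha
    obtain ⟨N, x, hx⟩ := ih
    obtain ⟨t, ht⟩ := exists_mul_eq_Z i
    refine ⟨N + 1, t * x, ?_⟩
    rw [pow_succ, ← mul_assoc, mul_assoc _ y, hx, mul_assoc, ← toGrp_Z_comm, ← ht, map_mul,
      map_mul, toGrp_s]
    simp only [mul_assoc, inv_mul_cancel_left]

theorem grp_conj (w : Grp k) (i j : Fin k) (m : ℕ) (hm : 1 ≤ m)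
    (h : w⁻¹ * gs i ^ m * w = gs j ^ m) : w⁻¹ * gs i * w = gs j := by
  obtain ⟨m, rfl⟩ : ∃ m', m = m' + 1 := ⟨m - 1, by omega⟩
  obtain ⟨N, x, hx⟩ := exists_pos w
  have hc : ∀ y, toGrp k (Z k) ^ N * y = y * toGrp k (Z k) ^ N := fun y =>
    (show Commute (toGrp k (Z k)) y from toGrp_Z_comm y).pow_left N
  rw [mul_assoc, inv_mul_eq_iff_eq_mul] at h ⊢
  have hpos : s i ^ (m + 1) * x = x * s j ^ (m + 1) := by
    apply toGrp_injective
    simp only [map_mul, map_pow, toGrp_s]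
    rw [← hx, ← mul_assoc, h, mul_assoc, mul_assoc, hc]
  have h2 := congrArg (toGrp k) (pos_conj _ i j x le_rfl hpos)
  rw [map_mul, map_mul, toGrp_s, toGrp_s, ← hx, mul_assoc, hc, ← mul_assoc, ← mul_assoc] at h2
  exact mul_right_cancel h2

end BraidMonoid

/-- If `w⁻¹ σᵢᵐ w = σⱼᵐ` for some `m ≥ 1`, then `w⁻¹ σᵢ w = σⱼ`. -/
theorem conj_gen_of_conj_gen_pow (n : ℕ) (hn : 2 ≤ n) (w : BraidGroup n)
    (i j : Fin (n - 1)) (m : ℕ) (hm : 1 ≤ m)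
    (h : w⁻¹ * braidGen n i ^ m * w = braidGen n j ^ m) :
    w⁻¹ * braidGen n i * w = braidGen n j := by
  exact BraidMonoid.grp_conj (k := n - 1) w i j m hm h
end

section
/- Let n ≥ 2 and let B_n be the Artin braid group. For 1 ≤ i ≤ n−1 define a_i = (σ_1 σ_2 ⋯ σ_{i−1}) · σ_i² · (σ_1 σ_2 ⋯ σ_{i−1})⁻¹ ∈ B_n. Then the elements a_1, …, a_{n−1} freely generate a free subgroup of B_n: the group homomorphism from the free group on n−1 generators to B_n sending the i-th free generator to a_i is injective. -/
/-- The prefix product `σ_1 ⋯ σ_{i-1}` (product of the generators with index below `i`,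
in increasing order). -/
def braidPrefix (n : ℕ) (i : Fin (n - 1)) : BraidGroup n :=
  (((List.finRange (n - 1)).filter (fun k => k < i)).map (braidGen n)).prod

/-- The element `a_i = (σ_1 ⋯ σ_{i-1}) · σ_i² · (σ_1 ⋯ σ_{i-1})⁻¹` of `B_n`. -/
def aGen (n : ℕ) (i : Fin (n - 1)) : BraidGroup n :=
  braidPrefix n i * braidGen n i ^ 2 * (braidPrefix n i)⁻¹

/-- The Hurwitz move on sequences in `G`, replacing the entries `(a, b)` at positions `i`, `i + 1`
by `(b, b⁻¹ a b)`. Sequences are indexed by all of `ℕ`; only finitely many entries are ever moved. -/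
def hurwitz (G : Type*) [Group G] (i : ℕ) : Equiv.Perm (ℕ → G) where
  toFun t k := if k = i then t (i + 1)
    else if k = i + 1 then (t (i + 1))⁻¹ * t i * t (i + 1) else t k
  invFun t k := if k = i then t i * t (i + 1) * (t i)⁻¹
    else if k = i + 1 then t i else t k
  left_inv t := by
    ext k
    by_cases h1 : k = i
    · subst h1; simp [mul_assoc]
    · by_cases h2 : k = i + 1
      · subst h2; simp
      · simp [h1, h2]
  right_inv t := by
    ext k
    by_cases h1 : k = i
    · subst h1; simp
    · by_cases h2 : k = i + 1
      · subst h2; simp [mul_assoc]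
      · simp [h1, h2]

section Hurwitz

variable {G : Type*} [Group G]

lemma hurwitz_apply (i : ℕ) (t : ℕ → G) (k : ℕ) : hurwitz G i t k =
    if k = i then t (i + 1)
    else if k = i + 1 then (t (i + 1))⁻¹ * t i * t (i + 1) else t k := rfl

lemma hurwitz_inv_apply (i : ℕ) (t : ℕ → G) (k : ℕ) : (hurwitz G i)⁻¹ t k =
    if k = i then t i * t (i + 1) * (t i)⁻¹
    else if k = i + 1 then t i else t k := rfl

lemma hurwitz_comm (i j : ℕ) (h : i + 2 ≤ j) :
    hurwitz G i * hurwitz G j = hurwitz G j * hurwitz G i := by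
  ext t k
  simp only [Equiv.Perm.mul_apply, hurwitz_apply]
  split_ifs <;> first | omega | rfl

lemma hurwitz_braid (i : ℕ) :
    hurwitz G i * hurwitz G (i + 1) * hurwitz G i =
      hurwitz G (i + 1) * hurwitz G i * hurwitz G (i + 1) := by
  ext t k
  simp only [Equiv.Perm.mul_apply, hurwitz_apply]
  split_ifs <;> first | omega | simp [mul_assoc]

/-- The image in `Equiv.Perm (ℕ → G)` of the prefix product `σ_1 ⋯ σ_i`. -/
def hurwitzPrefix (G : Type*) [Group G] (i : ℕ) : Equiv.Perm (ℕ → G) :=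
  ((List.range i).map (hurwitz G)).prod

lemma hurwitzPrefix_succ (i : ℕ) :
    hurwitzPrefix G (i + 1) = hurwitzPrefix G i * hurwitz G i := by
  simp [hurwitzPrefix, List.range_succ]

/-- The inverse of the prefix product carries the initial entry to position `i`, conjugating the
entries it passes. -/
lemma hurwitzPrefix_inv_apply (i : ℕ) (t : ℕ → G) (k : ℕ) : (hurwitzPrefix G i)⁻¹ t k =
    if k < i then t 0 * t (k + 1) * (t 0)⁻¹ else if k = i then t 0 else t k := by
  induction i generalizing k with
  | zero =>
    by_cases hk : k = 0
    · subst hk; simp [hurwitzPrefix]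
    · simp [hurwitzPrefix, hk]
  | succ i ih =>
    rw [hurwitzPrefix_succ, mul_inv_rev, Equiv.Perm.mul_apply, hurwitz_inv_apply]
    simp only [ih]
    rcases lt_trichotomy k i with h | h | h
    · simp [h, h.ne, Nat.lt_succ_of_lt h, show k ≠ i + 1 by omega]
    · subst h; simp
    · by_cases h2 : k = i + 1
      · subst h2; simp
      · simp [h.ne', h2, show ¬ k < i by omega, show ¬ k < i + 1 by omega]

/-- The action of `aGen`: the initial entry `a` is conjugated by the entry `b` at position `i + 1`.
Every other entry changes only by conjugation by products of conjugates of `a`. -/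
lemma hurwitzA_apply (i : ℕ) (t : ℕ → G) :
    (hurwitzPrefix G i * hurwitz G i ^ 2 * (hurwitzPrefix G i)⁻¹) t = fun k =>
      if k = 0 then (t (i + 1))⁻¹ * t 0 * t (i + 1)
      else if k ≤ i then ((t (i + 1))⁻¹ * t 0 * t (i + 1))⁻¹ * t 0 * t k *
        ((t 0)⁻¹ * ((t (i + 1))⁻¹ * t 0 * t (i + 1)))
      else if k = i + 1 then
        ((t (i + 1))⁻¹ * (t 0)⁻¹ * t (i + 1)) * t 0 * t (i + 1) else t k := by
  -- It is easier to compare both sides after undoing the prefix, whose inverse is known explicitly.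
  rw [mul_assoc, Equiv.Perm.mul_apply, ← Equiv.Perm.eq_inv_iff_eq]
  ext k
  rw [hurwitzPrefix_inv_apply, pow_two, Equiv.Perm.mul_apply, Equiv.Perm.mul_apply]
  simp only [hurwitz_apply, hurwitzPrefix_inv_apply]
  rcases lt_trichotomy k i with h | h | h
  · simp [h, h.ne, show k ≠ i + 1 by omega, show k + 1 ≤ i by omega]
    group
  · subst h; simp
  · by_cases h2 : k = i + 1
    · subst h2; simp [mul_assoc]
    · simp [h.ne', h2, show ¬ k < i by omega, show ¬ k ≤ i by omega, show k ≠ 0 by omega]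

end Hurwitz

/-- The action of the braid group on sequences in `G` by Hurwitz moves. -/
def hurwitzHom (G : Type*) [Group G] (n : ℕ) : BraidGroup n →* Equiv.Perm (ℕ → G) :=
  PresentedGroup.toGroup (rels := braidRels (n - 1)) 
    (f := fun i : Fin (n - 1) => hurwitz G (i : ℕ)) (by
    rintro r ⟨i, j, ⟨h, rfl⟩ | ⟨h, rfl⟩⟩
    · simp [hurwitz_comm (G := G) i j h]
    · simp only [map_mul, map_inv, FreeGroup.lift_apply_of, h]
      rw [hurwitz_braid, mul_inv_cancel])

section Action

variable {G H : Type*} [Group G] [Group H] {n : ℕ}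

lemma hurwitzHom_braidGen (i : Fin (n - 1)) : hurwitzHom G n (braidGen n i) = hurwitz G i :=
  PresentedGroup.toGroup.of _

lemma map_val_filter_finRange (m i : ℕ) (hi : i ≤ m) :
    ((List.finRange m).filter (fun k => k.val < i)).map Fin.val = List.range i := by
  have h : ((List.finRange m).filter (fun k => k.val < i)).map Fin.val =
      ((List.finRange m).map Fin.val).filter (fun k => k < i) := by
    rw [List.filter_map]; rfl
  rw [h, List.map_coe_finRange_eq_range]
  obtain ⟨d, rfl⟩ := Nat.exists_eq_add_of_le hi
  rw [List.range_add, List.filter_append, List.filter_eq_self.2, List.filter_eq_nil_iff.2,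
    List.append_nil]
  · simp
  · simp

lemma hurwitzHom_aGen (i : Fin (n - 1)) : hurwitzHom G n (aGen n i) =
    hurwitzPrefix G i * hurwitz G i ^ 2 * (hurwitzPrefix G i)⁻¹ := by
  have h : hurwitzHom G n (braidPrefix n i) = hurwitzPrefix G i := by
    rw [braidPrefix, map_list_prod, List.map_map, hurwitzPrefix,
      ← map_val_filter_finRange (n - 1) i i.2.le, List.map_map]
    congr 1
  rw [aGen, map_mul, map_mul, map_inv, map_pow, h, hurwitzHom_braidGen]

/-- The Hurwitz action is natural in the group. -/
lemma hurwitzHom_comp (f : G →* H) (b : BraidGroup n) (t : ℕ → G) :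
    hurwitzHom H n b (f ∘ t) = f ∘ hurwitzHom G n b t := by
  have hb : b ∈ Subgroup.closure (Set.range (braidGen n)) := by
    have h : Subgroup.closure (Set.range (braidGen n)) = ⊤ :=
      PresentedGroup.closure_range_of (braidRels (n - 1))
    rw [h]
    trivial
  induction hb using Subgroup.closure_induction generalizing t with
  | mem b hb =>
    obtain ⟨i, rfl⟩ := hb
    rw [hurwitzHom_braidGen, hurwitzHom_braidGen]
    ext k
    simp only [hurwitz_apply, Function.comp_apply]
    split_ifs <;> simp
  | one => simp
  | mul b c _ _ hb hc =>
    rw [map_mul, map_mul, Equiv.Perm.mul_apply, Equiv.Perm.mul_apply, hc, hb]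
  | inv b _ hb =>
    rw [map_inv, map_inv, Equiv.Perm.inv_eq_iff_eq, hb, ← Equiv.Perm.mul_apply, mul_inv_cancel,
      Equiv.Perm.one_apply]

end Action

/-- The sequence `(1, x₀⁻¹, x₁⁻¹, …)` of inverse free generators, continued by `1`. -/
def baseSeq (m : ℕ) : ℕ → FreeGroup (Fin m)
  | 0 => 1
  | k + 1 => if h : k < m then (FreeGroup.of ⟨k, h⟩)⁻¹ else 1

lemma lift_aGen_baseSeq (n : ℕ) (w : FreeGroup (Fin (n - 1))) :
    hurwitzHom (FreeGroup (Fin (n - 1))) n (FreeGroup.lift (aGen n) w) (baseSeq (n - 1)) =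
      baseSeq (n - 1) := by
  have hgen (i : Fin (n - 1)) :
      hurwitzHom (FreeGroup (Fin (n - 1))) n (aGen n i) (baseSeq (n - 1)) = baseSeq (n - 1) := by
    rw [hurwitzHom_aGen, hurwitzA_apply]
    have h0 : baseSeq (n - 1) 0 = 1 := rfl
    ext k
    simp only [h0]
    split_ifs with h1 h2 h3
    · simp [h1, h0]
    · simp
    · simp [h3]
    · rfl
  induction w using FreeGroup.induction_on with
  | C1 => simp
  | of i => simpa using hgen i
  | inv_of i ih =>
    rw [map_inv, map_inv, FreeGroup.lift_apply_of, Equiv.Perm.inv_eq_iff_eq, hgen]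
  | mul v w hv hw => rw [map_mul, map_mul, Equiv.Perm.mul_apply, hw, hv]

/-- On a sequence in the wreath product lying over `baseSeq`, the word `w` in the `aGen n i`
translates the initial entry, an element of the base group, by `w`. -/
lemma lift_aGen_left (n : ℕ) (w : FreeGroup (Fin (n - 1)))
    (t : ℕ → ℤˣ ≀ᵣ FreeGroup (Fin (n - 1)))
    (ht : RegularWreathProduct.rightHom ∘ t = baseSeq (n - 1)) (x : FreeGroup (Fin (n - 1))) :
    (hurwitzHom _ n (FreeGroup.lift (aGen n) w) t 0).left x = (t 0).left (w⁻¹ * x) := by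
  have hgen (i : Fin (n - 1)) (t : ℕ → ℤˣ ≀ᵣ FreeGroup (Fin (n - 1)))
      (ht : RegularWreathProduct.rightHom ∘ t = baseSeq (n - 1)) (x : FreeGroup (Fin (n - 1))) :
      (hurwitzHom _ n (aGen n i) t 0).left x = (t 0).left ((FreeGroup.of i)⁻¹ * x) := by
    have h0 : (t 0).right = 1 := congrFun ht 0
    have hi : (t (i + 1)).right = (FreeGroup.of i)⁻¹ := by
      have := congrFun ht (i + 1)
      simpa [baseSeq] using this
    rw [hurwitzHom_aGen, hurwitzA_apply]
    simp [h0, hi, mul_comm]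
    rw [mul_left_comm, Int.units_mul_self, mul_one]
  -- The sequences over `baseSeq` are preserved, because `baseSeq` itself is fixed.
  have hpres (w : FreeGroup (Fin (n - 1))) (t : ℕ → ℤˣ ≀ᵣ FreeGroup (Fin (n - 1)))
      (ht : RegularWreathProduct.rightHom ∘ t = baseSeq (n - 1)) :
      RegularWreathProduct.rightHom ∘ hurwitzHom _ n (FreeGroup.lift (aGen n) w) t =
        baseSeq (n - 1) := by
    rw [← hurwitzHom_comp, ht, lift_aGen_baseSeq]
  induction w using FreeGroup.induction_on generalizing t x with
  | C1 => simp
  | of i => simpa using hgen i t ht x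
  | inv_of i ih =>
    have h := hgen i _ (hpres (FreeGroup.of i)⁻¹ t ht) (FreeGroup.of i * x)
    rw [inv_mul_cancel_left] at h
    rw [inv_inv, ← h, map_inv, map_inv, FreeGroup.lift_apply_of, ← Equiv.Perm.mul_apply,
      mul_inv_cancel, Equiv.Perm.one_apply]
  | mul v w hv hw =>
    rw [map_mul, map_mul, Equiv.Perm.mul_apply, hv _ (hpres w t ht), hw t ht, mul_inv_rev,
      mul_assoc]

/-- The elements `a_1, …, a_{n-1}` freely generate a free subgroup of `B_n`: the
homomorphism from the free group on `n - 1` generators sending the `i`-th generator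
to `a_i` is injective. -/
theorem aGen_freely_generates (n : ℕ) (hn : 2 ≤ n) :
    Function.Injective (FreeGroup.lift (aGen n) : FreeGroup (Fin (n - 1)) →* BraidGroup n) := by
  classical
  rw [injective_iff_map_eq_one]
  intro w hw
  -- A sequence over `baseSeq` whose initial entry is the delta function at `1`.
  let t : ℕ → ℤˣ ≀ᵣ FreeGroup (Fin (n - 1)) := fun k =>
    ⟨if k = 0 then fun x => if x = 1 then -1 else 1 else 1, baseSeq (n - 1) k⟩
  have h := lift_aGen_left n w t rfl 1
  rw [hw, map_one, Equiv.Perm.one_apply] at h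
  by_contra hne
  simp [t, hne] at h
end

section
/- Let n ≥ 2 and let B_n be the Artin braid group with permutation homomorphism π : B_n → S_n determined by π(σ_i) = (i, i+1). Let b ∈ B_n be a half-twist (conjugate to σ_1) such that π(b) is the transposition swapping 1 and n. Then there exists P in the subgroup A_n of B_n generated by a_1, …, a_{n−1} such that b² = P⁻¹ · a_{n−1} · P; in particular b² ∈ A_n. -/
namespace HalfTwist

/-! ### Relations between the generators of `A` and the Artin generators -/

section Relations

variable {G : Type*} [Group G]

/-- The product `s 0 * s 1 * ⋯ * s (j - 1)`. -/
def pre (s : ℕ → G) (j : ℕ) : G := ((List.range j).map s).prod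

/-- The element `a_{j+1}` in terms of the sequence `s`. -/
def aElt (s : ℕ → G) (j : ℕ) : G := pre s j * s j ^ 2 * (pre s j)⁻¹

/-- The subgroup generated by the first `m` of the elements `aElt s j`. -/
def aSub (s : ℕ → G) (m : ℕ) : Subgroup G := Subgroup.closure {x | ∃ j < m, x = aElt s j}

/-- The first `m` terms of `s` satisfy the braid relations.  Commutation is required of all terms,
which is harmless because the terms from index `m` on are taken to be `1`. -/
structure IsBraidSeq (s : ℕ → G) (m : ℕ) : Prop where
  comm : ∀ i j, i + 2 ≤ j → s i * s j = s j * s i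
  braid : ∀ i, i + 1 < m → s i * s (i + 1) * s i = s (i + 1) * s i * s (i + 1)

lemma pre_zero (s : ℕ → G) : pre s 0 = 1 := by simp [pre]

lemma pre_succ (s : ℕ → G) (j : ℕ) : pre s (j + 1) = pre s j * s j := by
  simp [pre, List.range_succ]

lemma aElt_mem {s : ℕ → G} {m j : ℕ} (hj : j < m) : aElt s j ∈ aSub s m :=
  Subgroup.subset_closure ⟨j, hj, rfl⟩

variable {s : ℕ → G} {m : ℕ}

lemma pre_comm (hs : IsBraidSeq s m) (i j : ℕ) (h : j < i) : Commute (pre s j) (s i) := by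
  induction j with
  | zero => rw [pre_zero]; exact Commute.one_left _
  | succ j ih =>
    rw [pre_succ]
    exact (ih (by omega)).mul_left (hs.comm j i (by omega))

lemma pre_shift (hs : IsBraidSeq s m) (i j : ℕ) (h : i + 2 ≤ j) (hj : j ≤ m) :
    pre s j * s i = s (i + 1) * pre s j := by
  induction j, h using Nat.le_induction with
  | base =>
    rw [pre_succ, pre_succ]
    calc pre s i * s i * s (i + 1) * s i = pre s i * (s i * s (i + 1) * s i) := by group
      _ = pre s i * s (i + 1) * (s i * s (i + 1)) := by rw [hs.braid i (by omega)]; group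
      _ = s (i + 1) * (pre s i * s i * s (i + 1)) := by
        rw [(pre_comm hs (i + 1) i (by omega)).eq]; group
  | succ j hij ih =>
    rw [pre_succ, mul_assoc, ← hs.comm i j (by omega), ← mul_assoc, ih (by omega), mul_assoc]

lemma conj_far (hs : IsBraidSeq s m) (i j : ℕ) (hj : j < m) (h1 : j ≠ i)
    (h2 : j ≠ i + 1) : Commute (s (i + 1)) (aElt s j) := by
  rcases lt_or_gt_of_ne h1 with h | h
  · have c1 := (pre_comm hs (i + 1) j (by omega)).symm
    have c2 : Commute (s (i + 1)) (s j) := (hs.comm j (i + 1) (by omega)).symm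
    exact (c1.mul_right (c2.pow_right 2)).mul_right c1.inv_right
  · have c1 : SemiconjBy (pre s j) (s i) (s (i + 1)) :=
      pre_shift hs i j (by omega) (by omega)
    have c2 : Commute (s i) (s j ^ 2) :=
      Commute.pow_right (hs.comm i j (by omega)) 2
    -- `pre s j` carries the commuting pair `s i`, `s j ^ 2` to `s (i + 1)`, `aElt s j`
    have c3 : s (i + 1) = pre s j * s i * (pre s j)⁻¹ := by rw [c1.eq]; group
    rw [c3, aElt]
    exact Commute.conj_iff _ |>.2 c2

lemma conj_self (hs : IsBraidSeq s m) (i : ℕ) (hi : i + 1 < m) :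
    s (i + 1) * aElt s (i + 1) * (s (i + 1))⁻¹ = aElt s i := by
  have c := pre_comm hs (i + 1) i (by omega)
  have hb : s (i + 1) * s i * s (i + 1) * (s i)⁻¹ * (s (i + 1))⁻¹ = s i := by
    rw [← hs.braid i hi]; group
  calc s (i + 1) * aElt s (i + 1) * (s (i + 1))⁻¹
      = (s (i + 1) * pre s i) * s i * s (i + 1) ^ 2 * (s i)⁻¹ *
          (s (i + 1) * pre s i)⁻¹ := by
        rw [aElt, pre_succ]; group
    _ = pre s i * (s (i + 1) * s i * s (i + 1) * (s i)⁻¹ * (s (i + 1))⁻¹) ^ 2 *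
          (pre s i)⁻¹ := by
        rw [← c.eq, pow_two, pow_two]; group
    _ = aElt s i := by rw [hb, aElt]

lemma conj_prev (hs : IsBraidSeq s m) (i : ℕ) (hi : i + 1 < m) :
    s (i + 1) * aElt s i * (s (i + 1))⁻¹ = (aElt s i)⁻¹ * aElt s (i + 1) * aElt s i := by
  have c := pre_comm hs (i + 1) i (by omega)
  have hb : s (i + 1) * s i * (s (i + 1))⁻¹ = (s i)⁻¹ * s (i + 1) * s i := by
    rw [mul_inv_eq_iff_eq_mul]
    calc s (i + 1) * s i = (s i)⁻¹ * (s i * s (i + 1) * s i) := by group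
      _ = _ := by rw [hs.braid i hi]; group
  calc s (i + 1) * aElt s i * (s (i + 1))⁻¹
      = (s (i + 1) * pre s i) * s i ^ 2 * (s (i + 1) * pre s i)⁻¹ := by rw [aElt]; group
    _ = pre s i * (s (i + 1) * s i * (s (i + 1))⁻¹) ^ 2 * (pre s i)⁻¹ := by
        rw [← c.eq, pow_two, pow_two]; group
    _ = (aElt s i)⁻¹ * aElt s (i + 1) * aElt s i := by
        rw [hb, aElt, aElt, pre_succ]; simp only [pow_two]; group

lemma inv_conj_prev (hs : IsBraidSeq s m) (i : ℕ) (hi : i + 1 < m) :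
    (s (i + 1))⁻¹ * aElt s i * s (i + 1) = aElt s (i + 1) := by
  rw [← conj_self hs i hi]; group

lemma inv_conj_self (hs : IsBraidSeq s m) (i : ℕ) (hi : i + 1 < m) :
    (s (i + 1))⁻¹ * aElt s (i + 1) * s (i + 1) =
      aElt s (i + 1) * aElt s i * (aElt s (i + 1))⁻¹ := by
  have h := conj_prev hs i hi
  have h' : aElt s (i + 1) =
      aElt s i * (s (i + 1) * aElt s i * (s (i + 1))⁻¹) * (aElt s i)⁻¹ := by rw [h]; group
  conv_lhs => rw [h']
  rw [← inv_conj_prev hs i hi]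
  group

/-- A subgroup is normalized by `g` as soon as `g` and `g⁻¹` conjugate its generators into it. -/
lemma mem_normalizer_closure {S : Set G} {g : G}
    (h1 : ∀ x ∈ S, g * x * g⁻¹ ∈ Subgroup.closure S)
    (h2 : ∀ x ∈ S, g⁻¹ * x * g ∈ Subgroup.closure S) :
    g ∈ Subgroup.normalizer (Subgroup.closure S : Set G) := by
  have key : ∀ k : G, (∀ x ∈ S, k * x * k⁻¹ ∈ Subgroup.closure S) →
      ∀ x ∈ Subgroup.closure S, k * x * k⁻¹ ∈ Subgroup.closure S := by
    intro k hk
    have : Subgroup.closure S ≤ (Subgroup.closure S).comap (MulAut.conj k).toMonoidHom := by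
      rw [Subgroup.closure_le]
      intro x hx
      exact hk x hx
    exact fun x hx => this hx
  rw [Subgroup.mem_normalizer_iff]
  intro x
  refine ⟨key g h1 x, fun hx => ?_⟩
  have := key g⁻¹ (by simpa using h2) _ hx
  convert this using 1
  group

lemma gen_mem_normalizer (hs : IsBraidSeq s m) (i : ℕ) (hi : i + 1 < m) :
    s (i + 1) ∈ Subgroup.normalizer (aSub s m : Set G) := by
  have m0 : aElt s i ∈ aSub s m := aElt_mem (by omega)
  have m1 : aElt s (i + 1) ∈ aSub s m := aElt_mem hi
  apply mem_normalizer_closure <;> rintro _ ⟨j, hj, rfl⟩ <;> change _ ∈ aSub s m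
  · by_cases h1 : j = i
    · subst h1
      rw [conj_prev hs j hi]
      exact mul_mem (mul_mem (inv_mem m0) m1) m0
    by_cases h2 : j = i + 1
    · subst h2; rw [conj_self hs i hi]; exact m0
    · rw [(conj_far hs i j hj h1 h2).eq, mul_inv_cancel_right]
      exact aElt_mem hj
  · by_cases h1 : j = i
    · subst h1; rw [inv_conj_prev hs j hi]; exact m1
    by_cases h2 : j = i + 1
    · subst h2
      rw [inv_conj_self hs i hi]
      exact mul_mem (mul_mem m1 m0) (inv_mem m1)
    · rw [mul_assoc, ← (conj_far hs i j hj h1 h2).eq, inv_mul_cancel_left]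
      exact aElt_mem hj

end Relations

/-! ### The stabilizer of the first strand -/

section Stabilizer

variable {G : Type*} [Group G]

/-- The braids that normalize `aSub s m`, fix the first strand, and conjugate each `aElt s j` to an
`aSub s m`-conjugate of `aElt s j'`, where `π g` sends strand `j + 1` to strand `j' + 1`. -/
def conjStab (s : ℕ → G) (m : ℕ) (π : G →* Equiv.Perm (Fin (m + 1))) : Subgroup G where
  carrier := {g | g ∈ Subgroup.normalizer (aSub s m : Set G) ∧ π g 0 = 0 ∧
    ∀ j j' : Fin m, π g j.succ = j'.succ →
      ∃ P ∈ aSub s m, g * aElt s j * g⁻¹ = P * aElt s j' * P⁻¹}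
  one_mem' := by
    refine ⟨one_mem _, by simp, fun j j' h => ⟨1, one_mem _, ?_⟩⟩
    have : j = j' := by simpa using h
    simp [this]
  mul_mem' := by
    rintro g k ⟨gn, g0, hg⟩ ⟨kn, k0, hk⟩
    refine ⟨mul_mem gn kn, by simp [g0, k0], fun j j' h => ?_⟩
    have hne : π k j.succ ≠ 0 := fun h0 =>
      Fin.succ_ne_zero j ((π k).injective (h0.trans k0.symm))
    obtain ⟨l, hl⟩ := Fin.exists_succ_eq.2 hne
    obtain ⟨P, hP, eP⟩ := hk j l hl.symm
    obtain ⟨Q, hQ, eQ⟩ := hg l j' (by rw [hl, ← h, map_mul]; rfl)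
    refine ⟨g * P * g⁻¹ * Q, mul_mem ((Subgroup.mem_normalizer_iff.1 gn P).1 hP) hQ, ?_⟩
    calc g * k * aElt s j * (g * k)⁻¹ = g * (k * aElt s j * k⁻¹) * g⁻¹ := by group
      _ = (g * P * g⁻¹) * (g * aElt s l * g⁻¹) * (g * P * g⁻¹)⁻¹ := by rw [eP]; group
      _ = _ := by rw [eQ]; group
  inv_mem' := by
    rintro g ⟨gn, g0, hg⟩
    refine ⟨inv_mem gn, ?_, fun j j' h => ?_⟩
    · rw [map_inv, Equiv.Perm.inv_eq_iff_eq, g0]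
    · rw [map_inv, Equiv.Perm.inv_eq_iff_eq] at h
      obtain ⟨P, hP, eP⟩ := hg j' j h.symm
      refine ⟨g⁻¹ * P⁻¹ * g, ?_, ?_⟩
      · have := (Subgroup.mem_normalizer_iff.1 (inv_mem gn) P⁻¹).1 (inv_mem hP)
        simpa using this
      · have : aElt s j = P⁻¹ * (g * aElt s j' * g⁻¹) * P := by rw [eP]; group
        rw [this]; group

variable {s : ℕ → G} {m : ℕ} {π : G →* Equiv.Perm (Fin (m + 1))}

lemma aElt_mem_conjStab
    (hπ : ∀ i (hi : i < m), π (s i) = Equiv.swap ⟨i, by omega⟩ ⟨i + 1, by omega⟩)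
    (j : ℕ) (hj : j < m) : aElt s j ∈ conjStab s m π := by
  have hA : aElt s j ∈ aSub s m := aElt_mem hj
  have h1 : π (aElt s j) = 1 := by
    simp [aElt, hπ j hj, pow_two]
  refine ⟨Subgroup.le_normalizer hA, by simp [h1], fun l l' h => ⟨aElt s j, hA, ?_⟩⟩
  have : l = l' := by simpa [h1] using h
  rw [this]

lemma gen_mem_conjStab (hs : IsBraidSeq s m)
    (hπ : ∀ i (hi : i < m), π (s i) = Equiv.swap ⟨i, by omega⟩ ⟨i + 1, by omega⟩)
    (i : ℕ) (hi : i + 1 < m) : s (i + 1) ∈ conjStab s m π := by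
  refine ⟨gen_mem_normalizer hs i hi, ?_, fun j j' h => ?_⟩
  · rw [hπ _ hi]
    apply Equiv.swap_apply_of_ne_of_ne <;> simp [Fin.ext_iff]
  rw [hπ _ hi, Equiv.swap_apply_def] at h
  have m0 : aElt s i ∈ aSub s m := aElt_mem (by omega)
  by_cases h1 : (j : ℕ) = i
  · have : (j' : ℕ) = i + 1 := by
      simp only [Fin.ext_iff, Fin.val_succ, h1] at h
      split_ifs at h <;> simp_all
    rw [h1, this, conj_prev hs i hi]
    exact ⟨_, inv_mem m0, by group⟩
  by_cases h2 : (j : ℕ) = i + 1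
  · have : (j' : ℕ) = i := by
      simp only [Fin.ext_iff, Fin.val_succ, h2] at h
      split_ifs at h <;> simp_all
    rw [h2, this, conj_self hs i hi]
    exact ⟨1, one_mem _, by group⟩
  · have : j' = j := by
      simp only [Fin.ext_iff, Fin.val_succ] at h ⊢
      split_ifs at h <;> simp_all
    rw [this, (conj_far hs i j j.2 h1 h2).eq]
    exact ⟨1, one_mem _, by group⟩

/-- Right multiplication by a generator or its inverse permutes the cosets of the elements
`pre s j`, `j ≤ m`. -/
lemma coset_step (hs : IsBraidSeq s m)
    (hπ : ∀ i (hi : i < m), π (s i) = Equiv.swap ⟨i, by omega⟩ ⟨i + 1, by omega⟩)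
    (i j : ℕ) (hi : i < m) (hj : j ≤ m) :
    ∃ j' ≤ m, pre s j * s i * (pre s j')⁻¹ ∈ conjStab s m π ∧
      pre s j * (s i)⁻¹ * (pre s j')⁻¹ ∈ conjStab s m π := by
  rcases lt_trichotomy i j with h | h | h
  · by_cases h' : i + 1 = j
    · subst h'
      refine ⟨i, by omega, ?_, ?_⟩
      · have : pre s (i + 1) * s i * (pre s i)⁻¹ = aElt s i := by
          rw [pre_succ, aElt, pow_two]; group
        rw [this]; exact aElt_mem_conjStab hπ i hi
      · rw [pre_succ]; simp [one_mem]
    · have e := pre_shift hs i j (by omega) hj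
      have k := gen_mem_conjStab hs hπ i (by omega)
      refine ⟨j, hj, ?_, ?_⟩
      · rw [e, mul_inv_cancel_right]; exact k
      · have : pre s j * (s i)⁻¹ * (pre s j)⁻¹ = (pre s j * s i * (pre s j)⁻¹)⁻¹ := by group
        rw [this, e, mul_inv_cancel_right]; exact inv_mem k
  · subst h
    refine ⟨i + 1, by omega, ?_, ?_⟩
    · rw [pre_succ]; simp [one_mem]
    · have : pre s i * (s i)⁻¹ * (pre s (i + 1))⁻¹ = (aElt s i)⁻¹ := by
        rw [pre_succ, aElt, pow_two]; group
      rw [this]; exact inv_mem (aElt_mem_conjStab hπ i hi)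
  · obtain ⟨i, rfl⟩ : ∃ k, i = k + 1 := ⟨i - 1, by omega⟩
    have c := pre_comm hs (i + 1) j h
    have k := gen_mem_conjStab hs hπ i hi
    refine ⟨j, hj, ?_, ?_⟩
    · rw [c.eq, mul_inv_cancel_right]; exact k
    · rw [c.inv_right.eq, mul_inv_cancel_right]; exact inv_mem k

lemma exists_coset (hs : IsBraidSeq s m)
    (hπ : ∀ i (hi : i < m), π (s i) = Equiv.swap ⟨i, by omega⟩ ⟨i + 1, by omega⟩)
    (hgen : Subgroup.closure {x | ∃ i < m, x = s i} = ⊤) (g : G) :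
    ∃ j ≤ m, g * (pre s j)⁻¹ ∈ conjStab s m π := by
  have hg : g ∈ Subgroup.closure {x | ∃ i < m, x = s i} := hgen ▸ Subgroup.mem_top g
  induction hg using Subgroup.closure_induction_right with
  | one => exact ⟨0, by omega, by simp [pre_zero, one_mem]⟩
  | mul_right x hx y hy ih =>
    obtain ⟨i, hi, rfl⟩ := hy
    obtain ⟨j, hj, k⟩ := ih
    obtain ⟨j', hj', k', -⟩ := coset_step hs hπ i j hi hj
    refine ⟨j', hj', ?_⟩
    convert mul_mem k k' using 1
    group
  | mul_inv_cancel x hx y hy ih =>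
    obtain ⟨i, hi, rfl⟩ := hy
    obtain ⟨j, hj, k⟩ := ih
    obtain ⟨j', hj', -, k'⟩ := coset_step hs hπ i j hi hj
    refine ⟨j', hj', ?_⟩
    convert mul_mem k k' using 1
    group

lemma pre_apply_self
    (hπ : ∀ i (hi : i < m), π (s i) = Equiv.swap ⟨i, by omega⟩ ⟨i + 1, by omega⟩)
    (j : ℕ) (hj : j ≤ m) : π (pre s j) ⟨j, by omega⟩ = 0 := by
  induction j with
  | zero => simp [pre_zero]
  | succ j ih =>
    rw [pre_succ, map_mul, Equiv.Perm.mul_apply, hπ j (by omega), Equiv.swap_apply_right]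
    exact ih (by omega)

lemma pre_apply_gt
    (hπ : ∀ i (hi : i < m), π (s i) = Equiv.swap ⟨i, by omega⟩ ⟨i + 1, by omega⟩)
    (j : ℕ) (x : Fin (m + 1)) (hj : j < x) : π (pre s j) x = x := by
  induction j with
  | zero => simp [pre_zero]
  | succ j ih =>
    rw [pre_succ, map_mul, Equiv.Perm.mul_apply, hπ j (by omega),
      Equiv.swap_apply_of_ne_of_ne]
    · exact ih (by omega)
    · simp only [ne_eq, Fin.ext_iff]; omega
    · simp only [ne_eq, Fin.ext_iff]; omega

lemma mem_conjStab_of_fix (hs : IsBraidSeq s m)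
    (hπ : ∀ i (hi : i < m), π (s i) = Equiv.swap ⟨i, by omega⟩ ⟨i + 1, by omega⟩)
    (hgen : Subgroup.closure {x | ∃ i < m, x = s i} = ⊤) (g : G) (hg : π g 0 = 0) :
    g ∈ conjStab s m π := by
  obtain ⟨j, hj, k⟩ := exists_coset hs hπ hgen g
  have h0 : π (g * (pre s j)⁻¹) 0 = 0 := k.2.1
  have h1 : (π (pre s j))⁻¹ 0 = ⟨j, by omega⟩ := by
    rw [Equiv.Perm.inv_eq_iff_eq, pre_apply_self hπ j hj]
  rw [map_mul, map_inv, Equiv.Perm.mul_apply, h1] at h0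
  have : (⟨j, by omega⟩ : Fin (m + 1)) = 0 := (π g).injective (h0.trans hg.symm)
  have hj0 : j = 0 := by simpa [Fin.ext_iff] using this
  subst hj0
  simpa [pre_zero] using k

/-- All terms of index below `m` of a braid sequence are conjugate, because
`s (i + 1) = (s i * s (i + 1)) * s i * (s i * s (i + 1))⁻¹`. -/
lemma isConj_gen (hs : IsBraidSeq s m) (i : ℕ) (hi : i < m) : IsConj (s 0) (s i) := by
  induction i with
  | zero => exact IsConj.refl _
  | succ i ih =>
    refine (ih (by omega)).trans (isConj_iff.2 ⟨s i * s (i + 1), ?_⟩)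
    rw [hs.braid i hi]; group

end Stabilizer

/-! ### Half-twists exchanging the two outer strands -/

section Main

variable {G : Type*} [Group G] {s : ℕ → G} {m : ℕ} {π : G →* Equiv.Perm (Fin (m + 2))}

lemma halfTwist_sq (hs : IsBraidSeq s (m + 1))
    (hπ : ∀ i (hi : i < m + 1), π (s i) = Equiv.swap ⟨i, by omega⟩ ⟨i + 1, by omega⟩)
    (hgen : Subgroup.closure {x | ∃ i < m + 1, x = s i} = ⊤)
    (b : G) (hb : IsConj (s 0) b) (hperm : π b = Equiv.swap 0 (Fin.last (m + 1))) :
    ∃ P ∈ aSub s (m + 1), b ^ 2 = P⁻¹ * aElt s m * P := by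
  set c := pre s m * s m * (pre s m)⁻¹ with hc
  have hc2 : c ^ 2 = aElt s m := by rw [hc, aElt, pow_two, pow_two]; group
  have hπc : π c = Equiv.swap 0 (Fin.last (m + 1)) := by
    rw [hc, map_mul, map_mul, map_inv, hπ m (by omega), ← Equiv.swap_apply_apply,
      pre_apply_self hπ m (by omega), pre_apply_gt hπ m _ (by simp)]
    rfl
  have hcb : IsConj c b := by
    refine IsConj.trans ?_ hb
    exact ((isConj_gen hs m (by omega)).trans (isConj_iff.2 ⟨pre s m, rfl⟩)).symm
  obtain ⟨h, e, h0⟩ : ∃ h, h * c * h⁻¹ = b ∧ π h 0 = 0 := by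
    obtain ⟨h, e⟩ := isConj_iff.1 hcb
    by_cases h0 : π h 0 = 0
    · exact ⟨h, e, h0⟩
    -- otherwise `π h` moves strand `0` to the last one, and `h * c` is the required conjugator
    refine ⟨h * c, by rw [← e]; group, ?_⟩
    have e' := hperm
    rw [← e, map_mul, map_mul, map_inv, hπc, ← Equiv.swap_apply_apply] at e'
    rw [map_mul, hπc, Equiv.Perm.mul_apply, Equiv.swap_apply_left]
    have h1 := congrArg (fun σ : Equiv.Perm _ => σ 0) e'
    simp only [Equiv.swap_apply_left] at h1
    by_contra h2
    rw [Equiv.swap_apply_of_ne_of_ne (Ne.symm h0) (Ne.symm h2)] at h1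
    exact absurd h1 (by simp [Fin.ext_iff])
  have hl : π h (Fin.last (m + 1)) = Fin.last (m + 1) := by
    have e' := hperm
    rw [← e, map_mul, map_mul, map_inv, hπc, ← Equiv.swap_apply_apply, h0] at e'
    have h1 := congrArg (fun σ : Equiv.Perm _ => σ 0) e'
    simpa only [Equiv.swap_apply_left] using h1
  obtain ⟨P, hP, eP⟩ := (mem_conjStab_of_fix hs hπ hgen h h0).2.2 (Fin.last m) (Fin.last m)
    (by rw [Fin.succ_last]; exact hl)
  refine ⟨P⁻¹, inv_mem hP, ?_⟩
  rw [inv_inv]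
  rw [Fin.val_last] at eP
  rw [← eP, ← hc2, ← e, pow_two, pow_two]
  group

end Main

/-! ### The braid group -/

/-- The Artin generators as a sequence indexed by `ℕ`, extended by `1`. -/
noncomputable def genSeq (n : ℕ) (i : ℕ) : BraidGroup n :=
  if h : i < n - 1 then braidGen n ⟨i, h⟩ else 1

lemma genSeq_fin (n : ℕ) (i : Fin (n - 1)) : genSeq n i = braidGen n i := by
  simp [genSeq]

lemma braidPrefix_eq (n : ℕ) (i : Fin (n - 1)) : braidPrefix n i = pre (genSeq n) i := by
  have key : ∀ (M k : ℕ), k ≤ M → (List.range M).filter (fun x => x < k) = List.range k := by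
    intro M k hk
    obtain ⟨d, rfl⟩ := Nat.exists_eq_add_of_le hk
    rw [List.range_add, List.filter_append, List.filter_eq_self.2, List.filter_eq_nil_iff.2]
    · simp
    · simp
    · simp
  rw [braidPrefix, pre, ← key (n - 1) i i.2.le, ← List.map_coe_finRange_eq_range,
    List.filter_map, List.map_map]
  congr 2
  funext x
  exact (genSeq_fin n x).symm

lemma aGen_eq (n : ℕ) (i : Fin (n - 1)) : aGen n i = aElt (genSeq n) i := by
  rw [aGen, aElt, braidPrefix_eq, genSeq_fin]

lemma isBraidSeq_genSeq (n : ℕ) : IsBraidSeq (genSeq n) (n - 1) where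
  comm i j h := by
    unfold genSeq
    split_ifs with h1 h2
    · have : (PresentedGroup.mk (braidRels (n - 1))) (.of ⟨i, h1⟩ * .of ⟨j, h2⟩ *
          (.of ⟨i, h1⟩)⁻¹ * (.of ⟨j, h2⟩)⁻¹) = 1 :=
        PresentedGroup.one_of_mem ⟨_, _, Or.inl ⟨h, rfl⟩⟩
      rw [map_mul, map_inv, mul_inv_eq_one, map_mul, map_inv, mul_inv_eq_iff_eq_mul, map_mul] at this
      exact this
    all_goals simp
  braid i h := by
    unfold genSeq
    rw [dif_pos h, dif_pos (by omega : i < n - 1)]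
    have : (PresentedGroup.mk (braidRels (n - 1))) (.of ⟨i, by omega⟩ * .of ⟨i + 1, h⟩ *
          .of ⟨i, by omega⟩ * (.of ⟨i + 1, h⟩ * .of ⟨i, by omega⟩ * .of ⟨i + 1, h⟩)⁻¹) = 1 :=
      PresentedGroup.one_of_mem ⟨⟨i, by omega⟩, ⟨i + 1, h⟩, Or.inr ⟨rfl, rfl⟩⟩
    rw [map_mul, map_inv, mul_inv_eq_one] at this
    simp only [map_mul] at this
    exact this

lemma closure_genSeq (n : ℕ) :
    Subgroup.closure {x | ∃ i < n - 1, x = genSeq n i} = ⊤ := by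
  have h : {x | ∃ i < n - 1, x = genSeq n i} = Set.range (braidGen n) := by
    ext x
    constructor
    · rintro ⟨i, hi, rfl⟩
      exact ⟨⟨i, hi⟩, (genSeq_fin n ⟨i, hi⟩).symm⟩
    · rintro ⟨i, rfl⟩
      exact ⟨i, i.2, (genSeq_fin n i).symm⟩
  rw [h]
  exact PresentedGroup.closure_range_of (braidRels (n - 1))

lemma aSub_genSeq (n : ℕ) :
    aSub (genSeq n) (n - 1) = Subgroup.closure (Set.range (aGen n)) := by
  rw [aSub]
  congr 1
  ext x
  constructor
  · rintro ⟨i, hi, rfl⟩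
    exact ⟨⟨i, hi⟩, aGen_eq n ⟨i, hi⟩⟩
  · rintro ⟨i, rfl⟩
    exact ⟨i, i.2, aGen_eq n i⟩

end HalfTwist

/-- If `b` is a half-twist whose underlying permutation is the transposition `(1, n)`,
then `b²` is conjugate to `a_{n-1}` by an element of the subgroup `A_n = ⟨a_1, …, a_{n-1}⟩`. -/
theorem halfTwist_sq_conj_aGen (n : ℕ) (hn : 2 ≤ n)
    (π : BraidGroup n →* Equiv.Perm (Fin n))
    (hπ : ∀ i : Fin (n - 1), π (braidGen n i) =
      Equiv.swap ⟨i.1, by have := i.isLt; omega⟩ ⟨i.1 + 1, by have := i.isLt; omega⟩)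
    (b : BraidGroup n) (hb : IsConj (braidGen n ⟨0, by omega⟩) b)
    (hperm : π b = Equiv.swap ⟨0, by omega⟩ ⟨n - 1, by omega⟩) :
    ∃ P ∈ Subgroup.closure (Set.range (aGen n)),
      b ^ 2 = P⁻¹ * aGen n ⟨n - 2, by omega⟩ * P := by
  obtain ⟨m, rfl⟩ : ∃ m, n = m + 2 := ⟨n - 2, by omega⟩
  rw [← HalfTwist.aSub_genSeq, HalfTwist.aGen_eq]
  refine HalfTwist.halfTwist_sq (π := π) (HalfTwist.isBraidSeq_genSeq (m + 2)) ?_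
    (HalfTwist.closure_genSeq (m + 2)) b ?_ hperm
  · intro i hi
    rw [← hπ ⟨i, hi⟩, ← HalfTwist.genSeq_fin]
  · rwa [← HalfTwist.genSeq_fin] at hb
end

section
/- Let n ≥ 2 and let B_n be the Artin braid group with permutation homomorphism π : B_n → S_n determined by π(σ_i) = (i, i+1). Let b ∈ B_n and let k ≥ 1 be an integer. Then the following are equivalent: (1) there exists a half-twist h ∈ B_n (conjugate to σ_1) with π(h) equal to the transposition swapping 1 and n such that b = h^{2k}; (2) there exists P in the subgroup A_n of B_n generated by a_1, …, a_{n−1} such that b = P⁻¹ · a_{n−1}^k · P. -/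
/-- The elements `s 0, …, s (m - 1)` of a group satisfy the braid relations. The values `s i` with
`m ≤ i` are irrelevant. -/
structure IsBraidSeq {G : Type*} [Group G] (s : ℕ → G) (m : ℕ) : Prop where
  comm : ∀ i j, i + 2 ≤ j → j < m → s i * s j = s j * s i
  braid : ∀ i, i + 1 < m → s i * s (i + 1) * s i = s (i + 1) * s i * s (i + 1)

namespace IsBraidSeq

variable {G : Type*} [Group G]

/-- The product `s 0 * ⋯ * s (i - 1)`. -/
def pre (s : ℕ → G) : ℕ → G
  | 0 => 1
  | i + 1 => pre s i * s i

/-- The element `a i`, the full twist of strands `0` and `i + 1`. -/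
def tw (s : ℕ → G) (i : ℕ) : G := pre s i * s i ^ 2 * (pre s i)⁻¹

/-- The half-twist `c i` of strands `0` and `i + 1`, a square root of `a i`. -/
def htw (s : ℕ → G) (i : ℕ) : G := pre s i * s i * (pre s i)⁻¹

/-- The subgroup `A` generated by `a 0, …, a (m - 1)`. -/
def twGroup (s : ℕ → G) (m : ℕ) : Subgroup G := Subgroup.closure {x | ∃ i < m, x = tw s i}

/-- The subgroup `T` generated by `s 1, …, s (m - 1)`. -/
def tailGroup (s : ℕ → G) (m : ℕ) : Subgroup G :=
  Subgroup.closure {x | ∃ j, j + 1 < m ∧ x = s (j + 1)}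

variable {s : ℕ → G} {m : ℕ}

/-! ### Conjugation of the generators of `A` by the tail generators -/

lemma tw_mem {i : ℕ} (hi : i < m) : tw s i ∈ twGroup s m :=
  Subgroup.subset_closure ⟨i, hi, rfl⟩

lemma htw_sq (i : ℕ) : htw s i ^ 2 = tw s i := by
  simp only [htw, tw, conj_pow]

lemma pre_comm (H : IsBraidSeq s m) {i j : ℕ} (hij : i < j) (hj : j < m) :
    Commute (s j) (pre s i) := by
  induction i with
  | zero => exact Commute.one_right _
  | succ i ih =>
    exact (ih (by omega)).mul_right (H.comm i j (by omega) hj).symm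

lemma pre_shift (H : IsBraidSeq s m) {i j : ℕ} (hij : j + 1 < i) (hi : i ≤ m) :
    s (j + 1) * pre s i = pre s i * s j := by
  induction i with
  | zero => omega
  | succ i ih =>
    rcases Nat.lt_or_ge (j + 1) i with h | h
    · have e := H.comm j i (by omega) (by omega)
      calc s (j + 1) * (pre s i * s i) = (s (j + 1) * pre s i) * s i := by group
        _ = pre s i * (s j * s i) := by rw [ih h (by omega)]; group
        _ = pre s i * s i * s j := by rw [e]; group
    · obtain rfl : i = j + 1 := by omega
      have e := (H.pre_comm (i := j) (j := j + 1) (by omega) (by omega)).eq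
      have b := H.braid j (by omega)
      calc s (j + 1) * (pre s j * s j * s (j + 1))
          = (s (j + 1) * pre s j) * s j * s (j + 1) := by group
        _ = pre s j * (s (j + 1) * s j * s (j + 1)) := by rw [e]; group
        _ = pre s j * s j * s (j + 1) * s j := by rw [← b]; group

lemma comm_tw_of_lt (H : IsBraidSeq s m) {i j : ℕ} (hij : i + 1 < j) (hj : j < m) :
    Commute (s j) (tw s i) := by
  have h1 := H.pre_comm (i := i) (j := j) (by omega) hj
  have h2 : Commute (s j) (s i) := (H.comm i j (by omega) hj).symm
  exact (h1.mul_right (h2.pow_right 2)).mul_right h1.inv_right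

lemma comm_tw_of_gt (H : IsBraidSeq s m) {i j : ℕ} (hij : j + 1 < i) (hi : i < m) :
    Commute (s (j + 1)) (tw s i) := by
  have h1 := H.pre_shift hij hi.le
  have h2 : Commute (s j) (s i) := H.comm j i (by omega) hi
  have h3 : s (j + 1) = pre s i * s j * (pre s i)⁻¹ := by rw [← h1]; group
  have h4 := (h2.pow_right 2).eq
  show s (j + 1) * tw s i = tw s i * s (j + 1)
  rw [h3, tw]
  calc _ = pre s i * (s j * s i ^ 2) * (pre s i)⁻¹ := by group
    _ = _ := by rw [h4]; group

lemma conj_tw_succ (H : IsBraidSeq s m) {j : ℕ} (hj : j + 1 < m) :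
    s (j + 1) * tw s (j + 1) * (s (j + 1))⁻¹ = tw s j := by
  have e := (H.pre_comm (i := j) (j := j + 1) (by omega) hj).eq
  have b := H.braid j hj
  have key : s (j + 1) * s j * s (j + 1) ^ 2 = s j ^ 2 * s (j + 1) * s j := by
    calc _ = (s (j + 1) * s j * s (j + 1)) * s (j + 1) := by simp only [sq, mul_assoc]
      _ = s j * (s (j + 1) * s j * s (j + 1)) := by
        rw [← b]; simp only [mul_assoc] at b ⊢; rw [b]
      _ = _ := by rw [← b]; simp only [sq, mul_assoc]
  rw [mul_inv_eq_iff_eq_mul]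
  simp only [tw, pre]
  have e' : (pre s j)⁻¹ * s (j + 1) = s (j + 1) * (pre s j)⁻¹ := by
    rw [inv_mul_eq_iff_eq_mul, ← mul_assoc, ← e]; group
  calc _ = (s (j + 1) * pre s j) * s j * s (j + 1) ^ 2 * (s j)⁻¹ * (pre s j)⁻¹ := by group
    _ = pre s j * (s (j + 1) * s j * s (j + 1) ^ 2) * (s j)⁻¹ * (pre s j)⁻¹ := by rw [e]; group
    _ = pre s j * s j ^ 2 * (s (j + 1) * (pre s j)⁻¹) := by rw [key]; group
    _ = _ := by rw [← e']; group

/-- The product `a (j + 1) * a j`, in which strand `0` goes around strands `j + 1` and `j + 2`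
together, commutes with the generator exchanging these two strands. -/
lemma comm_tw_mul (H : IsBraidSeq s m) {j : ℕ} (hj : j + 1 < m) :
    Commute (s (j + 1)) (tw s (j + 1) * tw s j) := by
  have e := H.pre_comm (i := j) (j := j + 1) (by omega) hj
  have b := H.braid j hj
  have h : tw s (j + 1) * tw s j = pre s j * (s j * s (j + 1) ^ 2 * s j) * (pre s j)⁻¹ := by
    simp only [tw, pre]; group
  have c : Commute (s (j + 1)) (s j * s (j + 1) ^ 2 * s j) := by
    show _ * _ = _ * _
    calc s (j + 1) * (s j * s (j + 1) ^ 2 * s j)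
        = (s (j + 1) * s j * s (j + 1)) * s (j + 1) * s j := by simp only [sq, mul_assoc]
      _ = s j * s (j + 1) * (s j * s (j + 1) * s j) := by rw [← b]; simp only [mul_assoc]
      _ = _ := by rw [b]; simp only [sq, mul_assoc]
  rw [h]
  exact (e.mul_right c).mul_right e.inv_right

/-! ### Action of the tail group on conjugacy classes -/

/-- Conjugation by `f` preserves the subgroup `A` and maps each `a i` to an `A`-conjugate of some
`a j`, where `φ f` sends `i + 1` to `j + 1`. -/
def PermutesClasses (s : ℕ → G) (m : ℕ) (φ : G →* Equiv.Perm ℕ) (f : G) : Prop :=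
  (∀ x ∈ twGroup s m, f * x * f⁻¹ ∈ twGroup s m) ∧ φ f 0 = 0 ∧
  ∀ i < m, ∃ j < m, φ f (i + 1) = j + 1 ∧
    ∃ w ∈ twGroup s m, f * tw s i * f⁻¹ = w * tw s j * w⁻¹

variable {φ : G →* Equiv.Perm ℕ}

lemma PermutesClasses.of_tw {f : G} (h0 : φ f 0 = 0)
    (h : ∀ i < m, ∃ j < m, φ f (i + 1) = j + 1 ∧
      ∃ w ∈ twGroup s m, f * tw s i * f⁻¹ = w * tw s j * w⁻¹) : PermutesClasses s m φ f := by
  refine ⟨fun x hx => ?_, h0, h⟩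
  have : twGroup s m ≤ (twGroup s m).comap (MulAut.conj f).toMonoidHom := by
    refine (Subgroup.closure_le _).2 ?_
    rintro _ ⟨i, hi, rfl⟩
    obtain ⟨j, hj, -, w, hw, e⟩ := h i hi
    show f * tw s i * f⁻¹ ∈ twGroup s m
    rw [e]
    exact mul_mem (mul_mem hw (tw_mem hj)) (inv_mem hw)
  exact this hx

lemma PermutesClasses.mul {f g : G} (hf : PermutesClasses s m φ f)
    (hg : PermutesClasses s m φ g) : PermutesClasses s m φ (f * g) := by
  refine .of_tw (by simp [hf.2.1, hg.2.1]) fun i hi => ?_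
  obtain ⟨j, hj, e1, w, hw, e2⟩ := hg.2.2 i hi
  obtain ⟨k, hk, e3, v, hv, e4⟩ := hf.2.2 j hj
  refine ⟨k, hk, by simp [e1, e3], f * w * f⁻¹ * v, mul_mem (hf.1 w hw) hv, ?_⟩
  calc f * g * tw s i * (f * g)⁻¹ = f * (g * tw s i * g⁻¹) * f⁻¹ := by group
    _ = (f * w * f⁻¹) * (f * tw s j * f⁻¹) * (f * w * f⁻¹)⁻¹ := by rw [e2]; group
    _ = _ := by rw [e4]; group

lemma permutesClasses_gen (H : IsBraidSeq s m)
    (hφ : ∀ i < m, φ (s i) = Equiv.swap i (i + 1)) {j : ℕ} (hj : j + 1 < m) :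
    PermutesClasses s m φ (s (j + 1)) ∧ PermutesClasses s m φ (s (j + 1))⁻¹ := by
  have c1 := H.conj_tw_succ hj
  have c2 := (H.comm_tw_mul hj).eq
  have hfar : ∀ i < m, i ≠ j → i ≠ j + 1 → Commute (s (j + 1)) (tw s i) := by
    intro i hi h1 h2
    rcases Nat.lt_or_ge i j with h | h
    · exact H.comm_tw_of_lt (by omega) hj
    · exact H.comm_tw_of_gt (by omega) hi
  have c3 : (s (j + 1))⁻¹ * tw s j * s (j + 1) = tw s (j + 1) := by rw [← c1]; group
  have mj : tw s j ∈ twGroup s m := tw_mem (by omega)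
  have mj1 : tw s (j + 1) ∈ twGroup s m := tw_mem hj
  constructor
  · refine .of_tw ?_ fun i hi => ?_
    · rw [hφ _ hj]; exact Equiv.swap_apply_of_ne_of_ne (by omega) (by omega)
    by_cases h1 : i = j
    · subst h1
      refine ⟨i + 1, hj, by rw [hφ _ hj]; exact Equiv.swap_apply_left _ _,
        (tw s i)⁻¹, inv_mem mj, ?_⟩
      calc s (i + 1) * tw s i * (s (i + 1))⁻¹
          = (s (i + 1) * tw s (i + 1) * (s (i + 1))⁻¹)⁻¹ *
            (s (i + 1) * (tw s (i + 1) * tw s i)) * (s (i + 1))⁻¹ := by group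
        _ = _ := by rw [c1, c2]; group
    by_cases h2 : i = j + 1
    · subst h2
      exact ⟨j, by omega, by rw [hφ _ hj]; exact Equiv.swap_apply_right _ _, 1, one_mem _,
        by rw [c1]; group⟩
    · refine ⟨i, hi, ?_, 1, one_mem _, ?_⟩
      · rw [hφ _ hj]; exact Equiv.swap_apply_of_ne_of_ne (by omega) (by omega)
      · rw [(hfar i hi h1 h2).eq]; group
  · refine .of_tw ?_ fun i hi => ?_
    · rw [map_inv, hφ _ hj, Equiv.swap_inv]
      exact Equiv.swap_apply_of_ne_of_ne (by omega) (by omega)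
    by_cases h1 : i = j
    · subst h1
      refine ⟨i + 1, hj, ?_, 1, one_mem _, by rw [inv_inv, c3]; group⟩
      rw [map_inv, hφ _ hj, Equiv.swap_inv]; exact Equiv.swap_apply_left _ _
    by_cases h2 : i = j + 1
    · subst h2
      refine ⟨j, by omega, ?_, tw s (j + 1), mj1, ?_⟩
      · rw [map_inv, hφ _ hj, Equiv.swap_inv]; exact Equiv.swap_apply_right _ _
      calc (s (j + 1))⁻¹ * tw s (j + 1) * (s (j + 1))⁻¹⁻¹
          = (s (j + 1))⁻¹ * (tw s (j + 1) * tw s j * s (j + 1)) *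
            ((s (j + 1))⁻¹ * tw s j * s (j + 1))⁻¹ := by group
        _ = _ := by rw [c3, ← c2]; group
    · refine ⟨i, hi, ?_, 1, one_mem _, ?_⟩
      · rw [map_inv, hφ _ hj, Equiv.swap_inv]
        exact Equiv.swap_apply_of_ne_of_ne (by omega) (by omega)
      · rw [(hfar i hi h1 h2).inv_left.eq]; group

lemma permutesClasses (H : IsBraidSeq s m)
    (hφ : ∀ i < m, φ (s i) = Equiv.swap i (i + 1)) {f : G} (hf : f ∈ tailGroup s m) :
    PermutesClasses s m φ f := by
  induction hf using Subgroup.closure_induction'' with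
  | one => exact .of_tw (by simp) fun i hi => ⟨i, hi, by simp, 1, one_mem _, by group⟩
  | mem x hx =>
    obtain ⟨j, hj, rfl⟩ := hx
    exact (H.permutesClasses_gen hφ hj).1
  | inv_mem x hx =>
    obtain ⟨j, hj, rfl⟩ := hx
    exact (H.permutesClasses_gen hφ hj).2
  | mul x y _ _ hx hy => exact hx.mul hy

/-! ### Coset enumeration -/

/-- The elements `p 0, …, p m` represent all cosets of `A T`. -/
lemma exists_coset (H : IsBraidSeq s m) (hφ : ∀ i < m, φ (s i) = Equiv.swap i (i + 1))
    (hgen : Subgroup.closure {x | ∃ i < m, x = s i} = ⊤) (g : G) :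
    ∃ w ∈ twGroup s m, ∃ f ∈ tailGroup s m, ∃ i ≤ m, g = w * f * pre s i := by
  have hg : g ∈ Subgroup.closure {x | ∃ i < m, x = s i} := hgen ▸ Subgroup.mem_top g
  have hs : ∀ {j}, j + 1 < m → s (j + 1) ∈ tailGroup s m :=
    fun h => Subgroup.subset_closure ⟨_, h, rfl⟩
  -- Right multiplication of `p i` by `s j` shifts it past `p i`, unless `j` is `i` or `i - 1`.
  have hpast : ∀ i ≤ m, ∀ j < m, j ≠ i → j + 1 ≠ i →
      ∃ t ∈ tailGroup s m, pre s i * s j = t * pre s i := by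
    intro i hi j hj h1 h2
    rcases Nat.lt_or_ge j i with h | h
    · exact ⟨s (j + 1), hs (by omega), (H.pre_shift (by omega) hi).symm⟩
    · obtain ⟨j, rfl⟩ : ∃ j', j = j' + 1 := ⟨j - 1, by omega⟩
      exact ⟨s (j + 1), hs hj, (H.pre_comm (by omega) hj).eq.symm⟩
  induction hg using Subgroup.closure_induction_right with
  | one => exact ⟨1, one_mem _, 1, one_mem _, 0, by omega, by simp [pre]⟩
  | mul_right x _ y hy ih =>
    obtain ⟨w, hw, f, hf, i, hi, rfl⟩ := ih
    obtain ⟨j, hj, rfl⟩ := hy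
    by_cases h1 : j = i
    · subst h1
      exact ⟨w, hw, f, hf, j + 1, hj, by simp only [pre]; group⟩
    by_cases h2 : j + 1 = i
    · subst h2
      refine ⟨w * (f * tw s j * f⁻¹),
        mul_mem hw ((H.permutesClasses hφ hf).1 _ (tw_mem hj)), f, hf, j, by omega, ?_⟩
      simp [pre, tw, sq, mul_assoc]
    · obtain ⟨t, ht, e⟩ := hpast i hi j hj h1 h2
      exact ⟨w, hw, f * t, mul_mem hf ht, i, hi, by simp only [mul_assoc, e]⟩
  | mul_inv_cancel x _ y hy ih =>
    obtain ⟨w, hw, f, hf, i, hi, rfl⟩ := ih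
    obtain ⟨j, hj, rfl⟩ := hy
    by_cases h1 : j = i
    · subst h1
      refine ⟨w * (f * (tw s j)⁻¹ * f⁻¹),
        mul_mem hw ((H.permutesClasses hφ hf).1 _ (inv_mem (tw_mem hj))), f, hf, j + 1, hj, ?_⟩
      simp only [pre, tw]; group
    by_cases h2 : j + 1 = i
    · subst h2
      exact ⟨w, hw, f, hf, j, by omega, by simp only [pre]; group⟩
    · obtain ⟨t, ht, e⟩ := hpast i hi j hj h1 h2
      refine ⟨w, hw, f * t⁻¹, mul_mem hf (inv_mem ht), i, hi, ?_⟩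
      have e' : pre s i * (s j)⁻¹ = t⁻¹ * pre s i := by
        rw [mul_inv_eq_iff_eq_mul, mul_assoc, e]; group
      simp only [mul_assoc, e']

/-! ### Permutations and half-twists -/

lemma perm_pre (hφ : ∀ i < m, φ (s i) = Equiv.swap i (i + 1)) {i : ℕ} (hi : i ≤ m) :
    φ (pre s i) i = 0 ∧ ∀ j, i < j → φ (pre s i) j = j := by
  induction i with
  | zero => simp [pre]
  | succ i ih =>
    obtain ⟨h1, h2⟩ := ih (by omega)
    simp only [pre, map_mul, hφ i (by omega), Equiv.Perm.mul_apply, Equiv.swap_apply_right]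
    refine ⟨h1, fun j hj => ?_⟩
    rw [Equiv.swap_apply_of_ne_of_ne (by omega) (by omega), h2 j (by omega)]

lemma perm_htw (hφ : ∀ i < m, φ (s i) = Equiv.swap i (i + 1)) {i : ℕ} (hi : i < m) :
    φ (htw s i) = Equiv.swap 0 (i + 1) := by
  obtain ⟨h1, h2⟩ := perm_pre hφ hi.le
  rw [htw, map_mul, map_mul, map_inv, hφ i hi, ← Equiv.swap_apply_apply, h1, h2 _ (by omega)]

lemma perm_of_mem (hφ : ∀ i < m, φ (s i) = Equiv.swap i (i + 1)) {x : G}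
    (hx : x ∈ twGroup s m) : φ x = 1 := by
  have : twGroup s m ≤ φ.ker := by
    refine (Subgroup.closure_le _).2 ?_
    rintro _ ⟨i, hi, rfl⟩
    rw [SetLike.mem_coe, MonoidHom.mem_ker, ← htw_sq, map_pow, perm_htw hφ hi, sq,
      Equiv.swap_mul_self]
  exact this hx

lemma isConj_gen (H : IsBraidSeq s m) {i : ℕ} (hi : i < m) : IsConj (s 0) (s i) := by
  induction i with
  | zero => exact .refl _
  | succ i ih =>
    refine (ih (by omega)).trans (isConj_iff.2 ⟨s i * s (i + 1), ?_⟩)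
    rw [mul_inv_eq_iff_eq_mul, H.braid i hi]; group

lemma isConj_htw (H : IsBraidSeq s m) {i : ℕ} (hi : i < m) : IsConj (s 0) (htw s i) :=
  (H.isConj_gen hi).trans (isConj_iff.2 ⟨pre s i, rfl⟩)

/-- If the permutation of `g` fixes the strands `0` and `m`, then `g` conjugates `a (m - 1)` to an
`A`-conjugate of itself. -/
lemma exists_conj_tw (H : IsBraidSeq s m) (hφ : ∀ i < m, φ (s i) = Equiv.swap i (i + 1))
    (hgen : Subgroup.closure {x | ∃ i < m, x = s i} = ⊤) (hm : 0 < m) {g : G}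
    (h0 : φ g 0 = 0) (h1 : φ g m = m) :
    ∃ P ∈ twGroup s m, g⁻¹ * tw s (m - 1) * g = P⁻¹ * tw s (m - 1) * P := by
  obtain ⟨w, hw, f, hf, i, hi, rfl⟩ := H.exists_coset hφ hgen g
  have hi0 : i = 0 := by
    have e : φ (w * f * pre s i) i = 0 := by
      simp [perm_of_mem hφ hw, (perm_pre hφ hi).1, (H.permutesClasses hφ hf).2.1]
    exact (φ (w * f * pre s i)).injective (e.trans h0.symm)
  subst hi0
  have hfm : φ f m = m := by simpa [pre, perm_of_mem hφ hw] using h1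
  have hQ := H.permutesClasses hφ (inv_mem hf)
  obtain ⟨j, hj, e1, v, hv, e2⟩ := hQ.2.2 (m - 1) (by omega)
  obtain rfl : j = m - 1 := by
    rw [Nat.sub_add_cancel hm, map_inv] at e1
    have := Equiv.Perm.inv_eq_iff_eq.1 e1
    have : φ f m = φ f (j + 1) := hfm.trans this
    have := (φ f).injective this
    omega
  have hP := hQ.1 _ hw
  rw [inv_inv] at hP e2
  refine ⟨v⁻¹ * (f⁻¹ * w * f), mul_mem (inv_mem hv) hP, ?_⟩
  calc (w * f * pre s 0)⁻¹ * tw s (m - 1) * (w * f * pre s 0)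
      = (f⁻¹ * w * f)⁻¹ * (f⁻¹ * tw s (m - 1) * f) * (f⁻¹ * w * f) := by
        simp only [pre]; group
    _ = _ := by rw [e2]; group

/-- The equivalence for any group generated by a sequence satisfying the braid relations, together
with a compatible homomorphism to the permutations of `ℕ`. -/
theorem main (H : IsBraidSeq s m) (hφ : ∀ i < m, φ (s i) = Equiv.swap i (i + 1))
    (hgen : Subgroup.closure {x | ∃ i < m, x = s i} = ⊤) (hm : 0 < m) (b : G) (k : ℕ) :
    (∃ h, IsConj (s 0) h ∧ φ h = Equiv.swap 0 m ∧ b = h ^ (2 * k)) ↔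
      ∃ P ∈ twGroup s m, b = P⁻¹ * tw s (m - 1) ^ k * P := by
  have hc : φ (htw s (m - 1)) = Equiv.swap 0 m := by
    rw [perm_htw hφ (by omega), Nat.sub_add_cancel hm]
  have hcc := H.isConj_htw (i := m - 1) (by omega)
  have conj : ∀ (g x : G) (l : ℕ), (g⁻¹ * x * g) ^ l = g⁻¹ * x ^ l * g := fun g x l => by
    simpa using conj_pow (i := l) (a := g⁻¹) (b := x)
  constructor
  · rintro ⟨h, hh, hp, rfl⟩
    -- Among the conjugators taking `c` to `h`, one may be chosen that fixes both `0` and `m`.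
    obtain ⟨g, rfl, h0, h1⟩ : ∃ g, h = g⁻¹ * htw s (m - 1) * g ∧ φ g 0 = 0 ∧ φ g m = m := by
      obtain ⟨g, hg⟩ := isConj_iff.1 (hh.symm.trans hcc)
      have hg' : h = g⁻¹ * htw s (m - 1) * g := by rw [← hg]; group
      have hsw := hc
      rw [← hg, map_mul, map_mul, map_inv, hp, ← Equiv.swap_apply_apply] at hsw
      have hval : Equiv.swap 0 m (φ g 0) = φ g m := by rw [← hsw, Equiv.swap_apply_left]
      have hne : φ g 0 ≠ φ g m := fun e => hm.ne ((φ g).injective e)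
      by_cases e0 : φ g 0 = 0
      · exact ⟨g, hg', e0, by rw [← hval, e0, Equiv.swap_apply_left]⟩
      by_cases em : φ g 0 = m
      · refine ⟨htw s (m - 1) * g, by rw [hg']; group, ?_, ?_⟩
        · rw [map_mul, hc, Equiv.Perm.mul_apply, em, Equiv.swap_apply_right]
        · rw [map_mul, hc, Equiv.Perm.mul_apply, ← hval, em, Equiv.swap_apply_right,
            Equiv.swap_apply_left]
      · exact absurd (hval ▸ (Equiv.swap_apply_of_ne_of_ne e0 em).symm) hne
    obtain ⟨P, hP, e⟩ := H.exists_conj_tw hφ hgen hm h0 h1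
    exact ⟨P, hP, by rw [pow_mul, conj, htw_sq, e, conj]⟩
  · rintro ⟨P, hP, rfl⟩
    refine ⟨P⁻¹ * htw s (m - 1) * P, hcc.trans (isConj_iff.2 ⟨P⁻¹, by simp⟩), ?_, ?_⟩
    · simp [hc, perm_of_mem hφ hP]
    · rw [pow_mul, conj, htw_sq, conj]

end IsBraidSeq

/-! ### The presented braid group -/

/-- The generators of `B_{m+1}` as a sequence indexed by `ℕ`, with value `1` out of range. -/
def braidSeq (m i : ℕ) : BraidGroup (m + 1) :=
  if h : i < m then braidGen (m + 1) ⟨i, h⟩ else 1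

lemma braidSeq_of_lt {m i : ℕ} (h : i < m) : braidSeq m i = braidGen (m + 1) ⟨i, h⟩ :=
  dif_pos h

lemma isBraidSeq_braidSeq (m : ℕ) : IsBraidSeq (braidSeq m) m where
  comm i j hij hj := by
    have hi : i < m := by omega
    rw [braidSeq_of_lt hi, braidSeq_of_lt hj]
    have := PresentedGroup.one_of_mem (rels := braidRels m)
      ⟨⟨i, hi⟩, ⟨j, hj⟩, .inl ⟨hij, rfl⟩⟩
    rw [map_mul, map_mul, map_mul, map_inv, map_inv, mul_inv_eq_one, mul_inv_eq_iff_eq_mul] at this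
    exact this
  braid i hj := by
    have hi : i < m := by omega
    rw [braidSeq_of_lt hi, braidSeq_of_lt hj]
    have := PresentedGroup.one_of_mem (rels := braidRels m)
      ⟨⟨i, hi⟩, ⟨i + 1, hj⟩, .inr ⟨rfl, rfl⟩⟩
    rw [map_mul, map_inv, mul_inv_eq_one] at this
    simp only [map_mul] at this
    exact this

lemma closure_braidSeq (m : ℕ) : Subgroup.closure {x | ∃ i < m, x = braidSeq m i} = ⊤ := by
  have h : {x | ∃ i < m, x = braidSeq m i} = Set.range (braidGen (m + 1)) := by
    ext x
    constructor
    · rintro ⟨i, hi, rfl⟩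
      exact ⟨⟨i, hi⟩, (braidSeq_of_lt hi).symm⟩
    · rintro ⟨i, rfl⟩
      exact ⟨i.1, i.2, (braidSeq_of_lt i.2).symm⟩
  rw [h]
  exact PresentedGroup.closure_range_of (braidRels m)

lemma braidPrefix_eq (m : ℕ) (i : Fin m) :
    braidPrefix (m + 1) i = IsBraidSeq.pre (braidSeq m) i := by
  have h1 : ∀ k : ℕ, IsBraidSeq.pre (braidSeq m) k = ((List.range k).map (braidSeq m)).prod := by
    intro k
    induction k with
    | zero => rfl
    | succ k ih => simp [IsBraidSeq.pre, ih, List.range_succ]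
  have h2 : (braidGen (m + 1) : Fin m → _) = braidSeq m ∘ Fin.val :=
    funext fun j => (braidSeq_of_lt j.2).symm
  have h3 : ∀ d k : ℕ, (List.range (k + d)).filter (fun j => decide (j < k)) = List.range k := by
    intro d k
    induction d with
    | zero => exact List.filter_eq_self.2 fun a ha => by simpa using ha
    | succ d ih => rw [← add_assoc, List.range_succ, List.filter_append, ih]; simp
  have h4 : ((List.finRange m).filter (fun k => k < i)).map Fin.val = List.range i := by
    rw [← h3 (m - i) i, Nat.add_sub_cancel' i.2.le, ← List.map_coe_finRange_eq_range,
      List.filter_map]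
    rfl
  rw [h1, ← h4, List.map_map, braidPrefix, h2]
  rfl

lemma aGen_eq (m : ℕ) (i : Fin m) : aGen (m + 1) i = IsBraidSeq.tw (braidSeq m) i := by
  have h := braidSeq_of_lt i.2
  rw [IsBraidSeq.tw, ← braidPrefix_eq, h]
  rfl

lemma closure_aGen (m : ℕ) :
    Subgroup.closure (Set.range (aGen (m + 1))) = IsBraidSeq.twGroup (braidSeq m) m := by
  rw [IsBraidSeq.twGroup]
  congr 1
  ext x
  constructor
  · rintro ⟨i, rfl⟩
    exact ⟨i.1, i.2, aGen_eq m i⟩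
  · rintro ⟨i, hi, rfl⟩
    exact ⟨⟨i, hi⟩, aGen_eq m ⟨i, hi⟩⟩

lemma viaEmbeddingHom_swap (m : ℕ) (a b : Fin (m + 1)) :
    Equiv.Perm.viaEmbeddingHom Fin.valEmbedding (Equiv.swap a b) = Equiv.swap a.1 b.1 := by
  ext x
  rw [Equiv.Perm.viaEmbeddingHom_apply]
  by_cases hx : x < m + 1
  · have h := Equiv.Perm.viaEmbedding_apply (Equiv.swap a b) Fin.valEmbedding ⟨x, hx⟩
    simp only [Fin.valEmbedding_apply] at h
    rw [h]
    exact (Fin.val_injective.swap_apply a b ⟨x, hx⟩).symm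
  · rw [Equiv.Perm.viaEmbedding_apply_of_notMem,
      Equiv.swap_apply_of_ne_of_ne (by omega) (by omega)]
    rintro ⟨y, rfl⟩
    exact hx y.2

/-- `b` is the `2k`-th power of a half-twist whose permutation is the transposition `(1, n)`
if and only if `b` is conjugate to `a_{n-1}ᵏ` by an element of `A_n = ⟨a_1, …, a_{n-1}⟩`. -/
theorem pow_halfTwist_iff_conj_aGen_pow (n : ℕ) (hn : 2 ≤ n)
    (π : BraidGroup n →* Equiv.Perm (Fin n))
    (hπ : ∀ i : Fin (n - 1), π (braidGen n i) =
      Equiv.swap ⟨i.1, by have := i.isLt; omega⟩ ⟨i.1 + 1, by have := i.isLt; omega⟩)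
    (b : BraidGroup n) (k : ℕ) (hk : 1 ≤ k) :
    (∃ h : BraidGroup n, IsConj (braidGen n ⟨0, by omega⟩) h ∧
        π h = Equiv.swap ⟨0, by omega⟩ ⟨n - 1, by omega⟩ ∧ b = h ^ (2 * k)) ↔
    (∃ P ∈ Subgroup.closure (Set.range (aGen n)),
        b = P⁻¹ * aGen n ⟨n - 2, by omega⟩ ^ k * P) := by
  obtain ⟨m, rfl⟩ : ∃ m, n = m + 1 := ⟨n - 1, by omega⟩
  have hm : 0 < m := by omega
  -- Permutations of `Fin (m + 1)` are regarded as permutations of `ℕ` fixing all larger numbers.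
  let ε := Equiv.Perm.viaEmbeddingHom (Fin.valEmbedding (n := m + 1))
  have key := IsBraidSeq.main (φ := ε.comp π) (isBraidSeq_braidSeq m)
    (fun i hi => by
      rw [braidSeq_of_lt hi, MonoidHom.comp_apply, hπ]
      exact viaEmbeddingHom_swap m _ _)
    (closure_braidSeq m) hm b k
  have hε : ∀ h, (ε.comp π) h = Equiv.swap 0 m ↔
      π h = Equiv.swap ⟨0, by omega⟩ ⟨m + 1 - 1, by omega⟩ := fun h => by
    rw [MonoidHom.comp_apply, ← (Equiv.Perm.viaEmbeddingHom_injective Fin.valEmbedding).eq_iff,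
      viaEmbeddingHom_swap]
    rfl
  simp only [hε, braidSeq_of_lt hm] at key
  rw [closure_aGen]
  have ha : aGen (m + 1) ⟨m + 1 - 2, by omega⟩ = IsBraidSeq.tw (braidSeq m) (m - 1) :=
    aGen_eq m ⟨m + 1 - 2, by omega⟩
  rw [ha]
  exact key
end
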